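/- arXiv:1307.1479 — 2 statements merged into one kernel-verified Lean document; each statement's English description precedes it below -/
import Mathlib

section
/- There exists a field K of characteristic 0 and two quaternion division algebras D₁ and D₂ over K (central division K-algebras of degree 2) that are not isomorphic as K-algebras but have the same quadratic subfields: for every field extension F/K of degree 2, there is a K-algebra embedding F → D₁ if and only if there is a K-algebra embedding F → D₂. In particular, the genus of a quaternion division algebra can contain more than one class. -/
/-!
Write `E = K(i)` for a countable subfield `K` of `ℝ`, so that the norms from `E` are the sums of
two squares in `K`, and let `m, d ∈ K` with `m > 0`. If `d` is not yet a square in the quaternion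
algebra `(-1, m)`, adjoin to `E` a large real transcendental `x` and then a transcendental `t` on
the circle `|t|² = m (x² + d)`. Now `d = -x² + m |t / m|²` is the square of a pure quaternion.
On the other hand no further element of `K` becomes a sum of two squares: by unique factorisation
in `E[X]` and `E(x)[T, T⁻¹]`, a new such `b ∈ K` would make `b m (x² + d)` a norm from `E(x)`,
whereas the self-conjugate prime `x² + d` divides norms to even order.

Iterating countably often from `ℚ(i)`, we reach a `K` over which every quadratic extension embeds
into every `(-1, m)` with `m > 0`, while `3`, `7` and `21` are still not sums of two squares. So
`(-1, 3)` and `(-1, 7)` are division algebras, and they are not isomorphic since an isomorphism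
would make `21` a sum of two squares.
-/

open Complex Polynomial ComplexConjugate
open scoped Quaternion LaurentPolynomial IntermediateField

section Involution

variable {M : Type*} [CommMonoidWithZero M] {τ : M →*₀ M}

theorem exists_mul_mul_map_eq_of_dvd (hτ : Function.Involutive τ) {π q : M} (hπ : Prime π)
    (h : π ∣ q * τ q) : ∃ r, q * τ q = π * τ π * (r * τ r) := by
  rcases hπ.dvd_or_dvd h with ⟨r, rfl⟩ | ⟨s, hs⟩
  · exact ⟨r, by rw [map_mul, mul_mul_mul_comm]⟩
  · have hq : q = τ π * τ s := by rw [← map_mul, ← hs, hτ]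
    exact ⟨s, by rw [hs, hq, mul_comm, mul_mul_mul_comm]⟩

variable [UniqueFactorizationMonoid M]

theorem exists_unit_eq_mul_map_of_mul_norm_eq_norm (hτ : Function.Involutive τ) {u p q : M}
    (hu : IsUnit u) (hp : p ≠ 0) (h : u * (q * τ q) = p * τ p) :
    ∃ e : Mˣ, u = e * τ e := by
  have hτ0 {r : M} (hr : r ≠ 0) : τ r ≠ 0 := (map_ne_zero_iff τ hτ.injective).2 hr
  induction p using UniqueFactorizationMonoid.induction_on_prime generalizing q with
  | h₁ => exact absurd rfl hp
  | h₂ p hp_unit =>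
    have hq : IsUnit q := by
      have : IsUnit (u * (q * τ q)) := h ▸ hp_unit.mul (hp_unit.map τ)
      exact isUnit_of_mul_isUnit_left (isUnit_of_mul_isUnit_right this)
    lift p to Mˣ using hp_unit
    lift q to Mˣ using hq
    refine ⟨p * q⁻¹, ?_⟩
    have hqq : (q⁻¹ : Mˣ) * τ (q⁻¹ : Mˣ) * (q * τ q) = 1 := by
      rw [mul_mul_mul_comm, ← map_mul, Units.inv_mul, map_one, mul_one]
    calc u = (q⁻¹ : Mˣ) * τ (q⁻¹ : Mˣ) * (u * (q * τ q)) := by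
          rw [mul_left_comm, hqq, mul_one]
      _ = (p * q⁻¹ : Mˣ) * τ (p * q⁻¹ : Mˣ) := by
          rw [h, Units.val_mul, map_mul, mul_comm, mul_mul_mul_comm]
  | h₃ p π hp0 hπ ih =>
    have hdvd : π ∣ q * τ q := by
      rw [← hu.dvd_mul_left, h, mul_assoc]
      exact dvd_mul_right ..
    obtain ⟨r, hr⟩ := exists_mul_mul_map_eq_of_dvd hτ hπ hdvd
    refine ih hp0 (q := r) (mul_left_cancel₀ (mul_ne_zero hπ.ne_zero (hτ0 hπ.ne_zero)) ?_)
    rw [mul_left_comm, ← hr, h, map_mul, mul_mul_mul_comm]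

theorem even_multiplicity_mul_map (hτ : Function.Involutive τ) {π p : M} (hπ : Prime π)
    (hτπ : τ π = π) (hp : p ≠ 0) : Even (multiplicity π (p * τ p)) := by
  have hp' : p * τ p ≠ 0 := mul_ne_zero hp ((map_ne_zero_iff τ hτ.injective).2 hp)
  have hmul : emultiplicity π (τ p) = emultiplicity π p := by
    refine emultiplicity_eq_emultiplicity_iff.2 fun n ↦ ⟨fun h ↦ ?_, fun h ↦ ?_⟩
    · simpa only [map_pow, hτπ, hτ p] using map_dvd τ h
    · simpa only [map_pow, hτπ] using map_dvd τ h
  rw [multiplicity_mul hπ (FiniteMultiplicity.of_prime_left hπ hp'),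
    multiplicity_eq_of_emultiplicity_eq hmul]
  exact ⟨_, rfl⟩

theorem prime_mul_norm_ne_norm (hτ : Function.Involutive τ) {π p q : M} (hπ : Prime π)
    (hτπ : τ π = π) (hp : p ≠ 0) : π * (q * τ q) ≠ p * τ p := by
  intro h
  have hp' : p * τ p ≠ 0 := mul_ne_zero hp ((map_ne_zero_iff τ hτ.injective).2 hp)
  have hq : q ≠ 0 := by
    rintro rfl
    exact hp' (by rw [← h, zero_mul, mul_zero])
  have hfin : FiniteMultiplicity π (π * (q * τ q)) :=
    FiniteMultiplicity.of_prime_left hπ (h ▸ hp')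
  have hodd : multiplicity π (p * τ p) = multiplicity π (q * τ q) + 1 := by
    rw [← h, multiplicity_mul hπ hfin, add_comm, multiplicity_self]
  have heven := even_multiplicity_mul_map hτ hπ hτπ hp
  rw [hodd, Nat.even_add_one] at heven
  exact heven (even_multiplicity_mul_map hτ hπ hτπ hq)

end Involution

section Laurent

variable {k : Type*} [Field k]

theorem exists_eq_C_mul_T_of_isUnit {f : k[T;T⁻¹]} (hf : IsUnit f) :
    ∃ c n, f = LaurentPolynomial.C c * LaurentPolynomial.T n := by
  obtain ⟨n, p, hp⟩ := f.exists_T_pow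
  have hp_unit : IsUnit (algebraMap k[X] k[T;T⁻¹] p) := by
    rw [LaurentPolynomial.algebraMap_eq_toLaurent, hp]
    exact hf.mul (LaurentPolynomial.isUnit_T n)
  obtain ⟨m, hm⟩ := (IsLocalization.Away.algebraMap_isUnit_iff (X : k[X])).1 hp_unit
  obtain ⟨i, -, hi⟩ := (dvd_prime_pow prime_X m).1 hm
  obtain ⟨v, hv⟩ := hi.symm
  obtain ⟨c, -, hc⟩ := Polynomial.isUnit_iff.1 v.isUnit
  refine ⟨c, i - n, ?_⟩
  calc f = toLaurent p * LaurentPolynomial.T (-n) := by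
        rw [hp, LaurentPolynomial.mul_T_assoc, add_neg_cancel, LaurentPolynomial.T_zero, mul_one]
    _ = LaurentPolynomial.C c * LaurentPolynomial.T (i - n) := by
        rw [← hv, ← hc, mul_comm (X ^ i), map_mul, toLaurent_C, toLaurent_X_pow,
          LaurentPolynomial.T_sub, mul_assoc]

instance : UniqueFactorizationMonoid k[T;T⁻¹] :=
  UniqueFactorizationMonoid.of_isLocalization (.powers (X : k[X])) _

end Laurent

section NormForm

variable {R : Type*} [CommRing R] {ι : R →+* ℂ} {τ : R →+* R} {z : ℂ} {p q u π : R}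

theorem involutive_of_conj_comm (hι : Function.Injective ι) (hτ : ∀ r, ι (τ r) = conj (ι r)) :
    Function.Involutive τ := fun r ↦ hι <| by rw [hτ, hτ, conj_conj]

theorem mul_norm_eq_norm_of_normSq_eq (hι : Function.Injective ι)
    (hτ : ∀ r, ι (τ r) = conj (ι r)) (hz : z * ι q = ι p) (hu : normSq z = ι u) :
    u * (q * τ q) = p * τ p := by
  apply hι
  simp only [map_mul, hτ, ← hz, ← hu, ← mul_conj]
  ring

theorem numerator_ne_zero_of_normSq_eq (hι : Function.Injective ι) (hq : q ≠ 0) (hu : u ≠ 0)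
    (hz : z * ι q = ι p) (hzu : normSq z = ι u) : p ≠ 0 := by
  rintro rfl
  have hz0 : z = 0 := by simpa [hq, map_eq_zero_iff ι hι] using hz
  rw [hz0, map_zero, ofReal_zero, eq_comm, map_eq_zero_iff ι hι] at hzu
  exact hu hzu

variable [UniqueFactorizationMonoid R]

theorem exists_unit_normSq_eq (hι : Function.Injective ι) (hτ : ∀ r, ι (τ r) = conj (ι r))
    (hu : IsUnit u) (hq : q ≠ 0) (hz : z * ι q = ι p) (hzu : normSq z = ι u) :
    ∃ e : Rˣ, (normSq (ι e) : ℂ) = ι u := by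
  have := ι.domain_nontrivial
  have hp := numerator_ne_zero_of_normSq_eq hι hq hu.ne_zero hz hzu
  obtain ⟨e, he⟩ := exists_unit_eq_mul_map_of_mul_norm_eq_norm
    (τ := τ.toMonoidWithZeroHom) (involutive_of_conj_comm hι hτ) hu hp
    (mul_norm_eq_norm_of_normSq_eq hι hτ hz hzu)
  exact ⟨e, by rw [he, ← mul_conj, map_mul, ← hτ]; rfl⟩

theorem normSq_ne_of_prime (hι : Function.Injective ι) (hτ : ∀ r, ι (τ r) = conj (ι r))
    (hπ : Prime π) (hπr : τ π = π) (hq : q ≠ 0) (hz : z * ι q = ι p) :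
    (normSq z : ℂ) ≠ ι π := by
  intro hzπ
  have hp := numerator_ne_zero_of_normSq_eq hι hq hπ.ne_zero hz hzπ
  exact prime_mul_norm_ne_norm (τ := τ.toMonoidWithZeroHom) (involutive_of_conj_comm hι hτ) hπ hπr
    hp (mul_norm_eq_norm_of_normSq_eq hι hτ hz hzπ)

end NormForm

/-- A countable subfield of `ℂ` that contains `I` and is stable under conjugation; equivalently,
a field `K(i)` with `K` a countable subfield of `ℝ`. -/
structure ConjStableSubfield extends Subfield ℂ where
  countable' : carrier.Countable
  I_mem' : I ∈ carrier
  conj_mem' : ∀ {z}, z ∈ carrier → conj z ∈ carrier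

namespace ConjStableSubfield

variable {E F : ConjStableSubfield} {T z : ℂ} {d m : ℝ}

instance : SetLike ConjStableSubfield ℂ where
  coe E := E.carrier
  coe_injective E F h := by
    cases E
    cases F
    congr
    exact SetLike.coe_injective h

instance : SubfieldClass ConjStableSubfield ℂ where
  add_mem {E} := E.add_mem'
  mul_mem {E} := E.mul_mem'
  one_mem E := E.one_mem'
  zero_mem E := E.zero_mem'
  neg_mem {E} := E.neg_mem'
  inv_mem {E} _ := E.inv_mem' _

instance (E : ConjStableSubfield) : Countable E := E.countable'.to_subtype

theorem I_mem (E : ConjStableSubfield) : I ∈ E := E.I_mem'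

theorem conj_mem (hz : z ∈ E) : conj z ∈ E := E.conj_mem' hz

theorem re_mem (hz : z ∈ E) : (z.re : ℂ) ∈ E := by
  rw [re_eq_add_conj]
  exact div_mem (add_mem hz (conj_mem hz)) (ofNat_mem E 2)

theorem im_mem (hz : z ∈ E) : (z.im : ℂ) ∈ E := by
  rw [im_eq_sub_conj]
  exact div_mem (sub_mem hz (conj_mem hz)) (mul_mem (ofNat_mem E 2) E.I_mem)

/-- The field of real numbers lying in `E`. -/
noncomputable def realSubfield (E : ConjStableSubfield) : Subfield ℝ := E.toSubfield.comap ofRealHom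

theorem mem_realSubfield {b : ℝ} : b ∈ E.realSubfield ↔ (b : ℂ) ∈ E := Iff.rfl

/-- The restriction of complex conjugation to `E`. -/
noncomputable def conjHom (E : ConjStableSubfield) : E →+* E :=
  (starRingEnd ℂ).restrict E E fun _ ↦ conj_mem

/-- The norms from `E` to its real subfield, that is, the sums of two squares there. -/
noncomputable def norms (E : ConjStableSubfield) : Set ℝ := normSq '' E

theorem mem_norms_iff {b : ℝ} : b ∈ E.norms ↔ ∃ r s : E.realSubfield, (r : ℝ) ^ 2 + s ^ 2 = b := by
  constructor
  · rintro ⟨z, hz, rfl⟩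
    exact ⟨⟨z.re, re_mem hz⟩, ⟨z.im, im_mem hz⟩, by rw [normSq_apply]; ring⟩
  · rintro ⟨⟨r, hr⟩, ⟨s, hs⟩, rfl⟩
    exact ⟨r + s * I, add_mem hr (mul_mem hs E.I_mem), normSq_add_mul_I r s⟩

/-- `E ≤ F` means that `F` is an extension of `E` in which no element of `E` becomes a norm
unless it already is one in `E`. -/
instance : Preorder ConjStableSubfield where
  le E F := E.toSubfield ≤ F.toSubfield ∧ ∀ b ∈ E.realSubfield, b ∈ F.norms → b ∈ E.norms
  le_refl E := ⟨le_rfl, fun _ _ ↦ id⟩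
  le_trans _ _ _ h₁ h₂ := ⟨h₁.1.trans h₂.1, fun b hb h ↦ h₁.2 b hb (h₂.2 b (h₁.1 hb) h)⟩

open IntermediateField in
/-- The extension `E(T)`. -/
noncomputable def adjoin (E : ConjStableSubfield) (T : ℂ) (hT : conj T ∈ E⟮T⟯) :
    ConjStableSubfield where
  toSubfield := E⟮T⟯.toSubfield
  countable' := by
    refine Cardinal.le_aleph0_iff_set_countable.1 ((cardinalMk_adjoin_le E {T}).trans ?_)
    simp only [sup_le_iff, Cardinal.mk_le_aleph0, le_refl, and_self]
  I_mem' := E⟮T⟯.algebraMap_mem ⟨I, E.I_mem⟩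
  conj_mem' := by
    intro z hz
    change conj z ∈ E⟮T⟯
    induction hz using adjoin_induction with
    | mem z hz => rwa [Set.mem_singleton_iff.1 hz]
    | algebraMap a => exact E⟮T⟯.algebraMap_mem (E.conjHom a)
    | add y z _ _ hy hz => rw [map_add]; exact add_mem hy hz
    | inv z _ hz => rw [map_inv₀]; exact inv_mem hz
    | mul y z _ _ hy hz => rw [map_mul]; exact mul_mem hy hz

variable {hTc : conj T ∈ E⟮T⟯}

theorem mem_adjoin_self : T ∈ E.adjoin T hTc := IntermediateField.mem_adjoin_simple_self E T

theorem mem_adjoin_of_mem (hz : z ∈ E) : z ∈ E.adjoin T hTc :=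
  E⟮T⟯.algebraMap_mem ⟨z, hz⟩

theorem exists_mul_aeval_eq_of_mem_adjoin (hT : Transcendental E T) (hz : z ∈ E.adjoin T hTc) :
    ∃ p q : E[X], q ≠ 0 ∧ z * aeval T q = aeval T p := by
  obtain ⟨p, q, rfl⟩ := (IntermediateField.mem_adjoin_simple_iff E z).1 hz
  by_cases hq : q = 0
  · exact ⟨0, 1, one_ne_zero, by simp [hq]⟩
  · have hq' : aeval T q ≠ 0 := (map_ne_zero_iff _ (transcendental_iff_injective.1 hT)).2 hq
    exact ⟨p, q, hq, div_mul_cancel₀ _ hq'⟩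

theorem exists_transcendental_mem (E : ConjStableSubfield) {S : Set ℂ} (hS : ¬ S.Countable) :
    ∃ T ∈ S, Transcendental E T := by
  by_contra! h
  refine hS ((Algebraic.countable E ℂ).mono fun T hT ↦ ?_)
  exact not_not.1 (h T hT)

theorem zero_mem_norms (E : ConjStableSubfield) : (0 : ℝ) ∈ E.norms :=
  ⟨0, zero_mem E, map_zero normSq⟩

theorem isUnit_mk_ofReal {b : ℝ} (hb : b ∈ E.realSubfield) (hb0 : b ≠ 0) :
    IsUnit (⟨b, hb⟩ : E) :=
  IsUnit.mk0 _ fun h ↦ hb0 (ofReal_injective (congrArg Subtype.val h))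

theorem conjHom_mk_ofReal {b : ℝ} (hb : b ∈ E.realSubfield) :
    E.conjHom ⟨b, hb⟩ = ⟨b, hb⟩ :=
  Subtype.ext (conj_ofReal b)

theorem aeval_conj_map_conjHom (z : ℂ) (p : E[X]) :
    aeval (conj z) (p.map E.conjHom) = conj (aeval z p) := by
  rw [aeval_def, aeval_def, eval₂_map, hom_eval₂]
  rfl

section Real

variable {x : ℝ}

theorem conj_ofReal_mem_adjoin (E : ConjStableSubfield) (x : ℝ) : conj (x : ℂ) ∈ E⟮(x : ℂ)⟯ := by
  rw [conj_ofReal]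
  exact IntermediateField.mem_adjoin_simple_self E _

theorem aeval_ofReal_map_conjHom (x : ℝ) (p : E[X]) :
    aeval (x : ℂ) (p.map E.conjHom) = conj (aeval (x : ℂ) p) := by
  rw [← aeval_conj_map_conjHom, conj_ofReal]

variable {hxc : conj (x : ℂ) ∈ E⟮(x : ℂ)⟯}

theorem le_adjoin_ofReal (hx : Transcendental E (x : ℂ)) : E ≤ E.adjoin x hxc := by
  refine ⟨fun _ ↦ mem_adjoin_of_mem, ?_⟩
  rintro b hb ⟨z, hz, hzb⟩
  obtain rfl | hb0 := eq_or_ne b 0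
  · exact E.zero_mem_norms
  obtain ⟨p, q, hq, hpq⟩ := exists_mul_aeval_eq_of_mem_adjoin hx hz
  let β : E := ⟨b, hb⟩
  have hβ : aeval (x : ℂ) (C β) = b := aeval_C _ β
  have hβ_unit : IsUnit (C β) := isUnit_C.2 (isUnit_mk_ofReal hb hb0)
  obtain ⟨e, he⟩ := exists_unit_normSq_eq (ι := (aeval (x : ℂ) : E[X] →ₐ[E] ℂ).toRingHom)
    (τ := mapRingHom E.conjHom) (transcendental_iff_injective.1 hx)
    (aeval_ofReal_map_conjHom x) hβ_unit hq hpq (by rw [hzb]; exact hβ.symm)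
  obtain ⟨c, -, hc⟩ := Polynomial.isUnit_iff.1 e.isUnit
  have hcb : (normSq (aeval (x : ℂ) (e : E[X])) : ℂ) = b := he.trans hβ
  rw [← hc, aeval_C] at hcb
  exact ⟨c, c.2, ofReal_injective hcb⟩

theorem mul_sq_add_not_mem_norms_adjoin (hx : Transcendental E (x : ℂ)) {b : ℝ}
    (hb : b ∈ E.realSubfield) (hb0 : b ≠ 0) (hd : d ∈ E.realSubfield)
    (hirr : ∀ z ∈ E, z ^ 2 ≠ -d) : b * (x ^ 2 + d) ∉ (E.adjoin x hxc).norms := by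
  rintro ⟨z, hz, hzb⟩
  obtain ⟨p, q, hq, hpq⟩ := exists_mul_aeval_eq_of_mem_adjoin hx hz
  let β : E := ⟨b, hb⟩
  let δ : E := ⟨d, hd⟩
  have hβ_unit : IsUnit (C β) := isUnit_C.2 (isUnit_mk_ofReal hb hb0)
  have hquad : Irreducible (X ^ 2 - C (-δ)) :=
    X_pow_sub_C_irreducible_of_prime Nat.prime_two fun c hc ↦
      hirr c c.2 (by simpa [δ] using congrArg Subtype.val hc)
  have hπ : Prime (C β * (X ^ 2 - C (-δ))) :=
    ((irreducible_isUnit_mul hβ_unit).2 hquad).prime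
  refine normSq_ne_of_prime (ι := (aeval (x : ℂ) : E[X] →ₐ[E] ℂ).toRingHom)
    (τ := mapRingHom E.conjHom) (transcendental_iff_injective.1 hx)
    (aeval_ofReal_map_conjHom x) hπ ?_ hq hpq ?_
  · simp [β, δ, conjHom_mk_ofReal]
  · calc (normSq z : ℂ) = b * (x ^ 2 - -d) := by rw [hzb, sub_neg_eq_add]; push_cast; rfl
      _ = aeval (x : ℂ) (C β * (X ^ 2 - C (-δ))) := by
        rw [map_mul, map_sub, map_pow, aeval_X, aeval_C, aeval_C]
        rfl

end Real

section Circle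

theorem conj_mem_adjoin_of_normSq_mem (hT : normSq T ∈ E.realSubfield) : conj T ∈ E⟮T⟯ := by
  obtain rfl | hT0 := eq_or_ne T 0
  · rw [map_zero]
    exact zero_mem _
  rw [eq_div_of_mul_eq hT0 (normSq_eq_conj_mul_self (z := T)).symm]
  exact div_mem (E⟮T⟯.algebraMap_mem ⟨_, hT⟩) (IntermediateField.mem_adjoin_simple_self E T)

variable {t : ℂˣ}

/-- The evaluation of Laurent polynomials over `E` at `t`. -/
noncomputable def laurentEval (E : ConjStableSubfield) (t : ℂˣ) : E[T;T⁻¹] →+* ℂ :=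
  LaurentPolynomial.eval₂ (algebraMap E ℂ) t

/-- The automorphism of `E[T;T⁻¹]` that acts on `E` by conjugation and sends `T` to `g T⁻¹`. -/
noncomputable def laurentConj (E : ConjStableSubfield) (g : Eˣ) : E[T;T⁻¹] →+* E[T;T⁻¹] :=
  LaurentPolynomial.eval₂ (LaurentPolynomial.C.comp E.conjHom)
    (Units.map (LaurentPolynomial.C : E →+* E[T;T⁻¹]) g * (LaurentPolynomial.isUnit_T 1).unit⁻¹)

theorem laurentEval_laurentConj {g : Eˣ} (hg : normSq t = (g : ℂ)) (f : E[T;T⁻¹]) :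
    E.laurentEval t (E.laurentConj g f) = conj (E.laurentEval t f) := by
  suffices h : (E.laurentEval t).comp (E.laurentConj g) =
      (starRingEnd ℂ).comp (E.laurentEval t) from DFunLike.congr_fun h f
  refine IsLocalization.ringHom_ext (.powers (X : E[X])) (Polynomial.ringHom_ext ?_ ?_)
  · intro a
    have ha : algebraMap E ℂ (E.conjHom a) = conj (algebraMap E ℂ a) := rfl
    simp [laurentConj, laurentEval, ha]
  · have ht : conj (t : ℂ) = algebraMap E ℂ g * (t : ℂ)⁻¹ := by
      rw [eq_mul_inv_iff_mul_eq₀ t.ne_zero, ← normSq_eq_conj_mul_self, hg]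
      rfl
    simp [laurentConj, laurentEval, ht]

theorem laurentEval_injective (ht : Transcendental E (t : ℂ)) :
    Function.Injective (E.laurentEval t) := by
  rw [injective_iff_map_eq_zero]
  intro f hf
  obtain ⟨n, p, hp⟩ := f.exists_T_pow
  have hp0 : aeval (t : ℂ) p = 0 := by
    rw [aeval_def, ← LaurentPolynomial.eval₂_toLaurent, hp]
    exact (map_mul (E.laurentEval t) _ _).trans (by rw [hf, zero_mul])
  rw [transcendental_iff.1 ht p hp0, map_zero, eq_comm] at hp
  exact (LaurentPolynomial.isUnit_T n).mul_left_eq_zero.1 hp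

theorem exists_eq_normSq_mul_zpow_of_mem_norms_adjoin {hTc : conj (t : ℂ) ∈ E⟮(t : ℂ)⟯}
    (ht : Transcendental E (t : ℂ)) (hg : normSq t ∈ E.realSubfield) {b : ℝ} (hb0 : b ≠ 0)
    (hb : b ∈ E.realSubfield) (hbt : b ∈ (E.adjoin t hTc).norms) :
    ∃ c ∈ E, ∃ n : ℤ, b = normSq c * normSq t ^ n := by
  obtain ⟨z, hz, hzb⟩ := hbt
  obtain ⟨p, q, hq, hpq⟩ := exists_mul_aeval_eq_of_mem_adjoin ht hz
  have hg_unit := isUnit_mk_ofReal hg (normSq_pos.2 t.ne_zero).ne'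
  have hb_unit := isUnit_mk_ofReal hb hb0
  have hbC : E.laurentEval t (LaurentPolynomial.C ⟨b, hb⟩) = b := LaurentPolynomial.eval₂_C ..
  obtain ⟨e, he⟩ := exists_unit_normSq_eq (laurentEval_injective ht)
    (laurentEval_laurentConj (g := hg_unit.unit) rfl) (hb_unit.map LaurentPolynomial.C)
    (p := toLaurent p) (toLaurent_ne_zero.2 hq)
    (by simpa [laurentEval, aeval_def] using hpq) (by rw [hzb, hbC])
  obtain ⟨c, n, hcn⟩ := exists_eq_C_mul_T_of_isUnit e.isUnit
  refine ⟨c, c.2, n, ?_⟩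
  rw [← ofReal_injective.eq_iff, ← hbC, ← he, hcn, laurentEval,
    LaurentPolynomial.eval₂_C_mul_T, normSq_mul, Units.val_zpow_eq_zpow_val, map_zpow₀]
  rfl

theorem mem_norms_or_mul_mem_norms_of_mem_norms_adjoin {hTc : conj (t : ℂ) ∈ E⟮(t : ℂ)⟯}
    (ht : Transcendental E (t : ℂ)) (hg : normSq t ∈ E.realSubfield) {b : ℝ}
    (hb : b ∈ E.realSubfield) (hbt : b ∈ (E.adjoin t hTc).norms) :
    b ∈ E.norms ∨ b * normSq t ∈ E.norms := by
  obtain rfl | hb0 := eq_or_ne b 0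
  · exact .inl E.zero_mem_norms
  obtain ⟨c, hc, n, rfl⟩ := exists_eq_normSq_mul_zpow_of_mem_norms_adjoin ht hg hb0 hb hbt
  have heven (k : ℤ) : normSq c * normSq t ^ (k + k) ∈ E.norms := by
    have hpow : ((normSq t : ℂ)) ^ k ∈ E := zpow_mem (mem_realSubfield.1 hg) k
    refine ⟨c * normSq t ^ k, mul_mem hc hpow, ?_⟩
    rw [normSq_mul, map_zpow₀, normSq_ofReal, mul_zpow,
      zpow_add₀ (normSq_pos.2 t.ne_zero).ne']
  obtain ⟨k, rfl⟩ | ⟨k, rfl⟩ := n.even_or_odd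
  · exact .inl (heven k)
  · refine .inr ?_
    rw [mul_assoc, ← zpow_add_one₀ (normSq_pos.2 t.ne_zero).ne',
      show 2 * k + 1 + 1 = (k + 1) + (k + 1) by ring]
    exact heven (k + 1)

end Circle

/-- `d` is the square of an element of the quaternion algebra `(-1, m)` over the real subfield
of `E`: either of a scalar, or of a pure quaternion `a i + y j + z k`, whose square is
`-a ^ 2 + m (y ^ 2 + z ^ 2)`. -/
def IsQuaternionSquare (E : ConjStableSubfield) (m d : ℝ) : Prop :=
  (∃ a ∈ E.realSubfield, d = a ^ 2) ∨ ∃ a ∈ E.realSubfield, ∃ n ∈ E.norms, d = -a ^ 2 + m * n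

theorem IsQuaternionSquare.mono (h : E.IsQuaternionSquare m d) (hEF : E ≤ F) :
    F.IsQuaternionSquare m d := by
  obtain ⟨a, ha, hd⟩ | ⟨a, ha, n, hn, hd⟩ := h
  · exact .inl ⟨a, hEF.1 ha, hd⟩
  · exact .inr ⟨a, hEF.1 ha, n, Set.image_mono hEF.1 hn, hd⟩

theorem exists_transcendental_ofReal_gt (E : ConjStableSubfield) (c : ℝ) :
    ∃ x : ℝ, c < x ∧ Transcendental E (x : ℂ) := by
  have hS : ¬ (ofReal '' Set.Ioo c (c + 1)).Countable := fun hS ↦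
    (lt_add_one c).not_ge <| Cardinal.Real.Ioo_countable_iff.1 <|
      Set.countable_of_injective_of_countable_image ofReal_injective.injOn hS
  obtain ⟨_, ⟨x, hx, rfl⟩, hxE⟩ := E.exists_transcendental_mem hS
  exact ⟨x, hx.1, hxE⟩

theorem not_countable_setOf_normSq_eq {g : ℝ} (hg : 0 < g) : ¬ {z | normSq z = g}.Countable := by
  intro hS
  have hre : Set.Ioo 0 √g ⊆ re '' {z | normSq z = g} := by
    intro r hr
    have hrg : 0 ≤ g - r ^ 2 := sub_nonneg.2 ((Real.le_sqrt' hr.1).1 hr.2.le)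
    refine ⟨⟨r, √(g - r ^ 2)⟩, ?_, rfl⟩
    rw [Set.mem_ofPred_eq, normSq_mk, Real.mul_self_sqrt hrg]
    ring
  exact (Real.sqrt_pos.2 hg).not_ge (Cardinal.Real.Ioo_countable_iff.1 ((hS.image re).mono hre))

theorem exists_transcendental_normSq_eq (E : ConjStableSubfield) {g : ℝ} (hg : 0 < g) :
    ∃ t : ℂˣ, normSq t = g ∧ Transcendental E (t : ℂ) := by
  obtain ⟨t, ht, htE⟩ := E.exists_transcendental_mem (not_countable_setOf_normSq_eq hg)
  exact ⟨Units.mk0 t (normSq_pos.1 (ht ▸ hg)), ht, htE⟩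

theorem sq_ne_neg_of_not_isQuaternionSquare (hd : ¬ E.IsQuaternionSquare m d) (hz : z ∈ E) :
    z ^ 2 ≠ -d := by
  intro h
  have hre : z.re ^ 2 - z.im ^ 2 = -d := by
    simpa [sq] using congrArg re h
  have him : z.re * z.im = 0 := by
    have : z.re * z.im + z.im * z.re = 0 := by simpa [sq] using congrArg im h
    linarith
  refine hd ?_
  obtain h0 | h0 := mul_eq_zero.1 him
  · exact .inl ⟨z.im, im_mem hz, by rw [h0] at hre; linarith⟩
  · exact .inr ⟨z.re, re_mem hz, 0, E.zero_mem_norms, by rw [h0] at hre; linarith⟩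

theorem le_adjoin_adjoin {x : ℝ} {t : ℂˣ} {hxc : conj (x : ℂ) ∈ E⟮(x : ℂ)⟯}
    {htc : conj (t : ℂ) ∈ (E.adjoin x hxc)⟮(t : ℂ)⟯} (hx : Transcendental E (x : ℂ))
    (ht : Transcendental (E.adjoin x hxc) (t : ℂ)) (hm : m ∈ E.realSubfield) (hm0 : m ≠ 0)
    (hd : d ∈ E.realSubfield) (hirr : ∀ z ∈ E, z ^ 2 ≠ -d)
    (hg : normSq t ∈ (E.adjoin x hxc).realSubfield) (htg : normSq t = m * (x ^ 2 + d)) :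
    E ≤ (E.adjoin x hxc).adjoin t htc := by
  have hEx := le_adjoin_ofReal hx (hxc := hxc)
  refine ⟨fun _ hz ↦ mem_adjoin_of_mem (mem_adjoin_of_mem hz), fun b hb hbt ↦ ?_⟩
  obtain h | h := mem_norms_or_mul_mem_norms_of_mem_norms_adjoin ht hg (hEx.1 hb) hbt
  · exact hEx.2 b hb h
  · obtain rfl | hb0 := eq_or_ne b 0
    · exact E.zero_mem_norms
    · rw [htg, ← mul_assoc] at h
      exact absurd h <| mul_sq_add_not_mem_norms_adjoin hx (mul_mem hb hm) (mul_ne_zero hb0 hm0)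
        hd hirr

theorem exists_ge_isQuaternionSquare (hm : m ∈ E.realSubfield) (hm0 : 0 < m)
    (hd : d ∈ E.realSubfield) : ∃ F, E ≤ F ∧ F.IsQuaternionSquare m d := by
  by_cases hsq : E.IsQuaternionSquare m d
  · exact ⟨E, le_rfl, hsq⟩
  obtain ⟨x, hdx, hx⟩ := E.exists_transcendental_ofReal_gt √(-d)
  let E₁ := E.adjoin x (E.conj_ofReal_mem_adjoin x)
  have hE₁ : E ≤ E₁ := le_adjoin_ofReal hx
  have hxE₁ : x ∈ E₁.realSubfield := mem_adjoin_self (hTc := E.conj_ofReal_mem_adjoin x)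
  have hpos : 0 < m * (x ^ 2 + d) := mul_pos hm0 (by linarith [Real.lt_sq_of_sqrt_lt hdx])
  obtain ⟨t, htg, ht⟩ := E₁.exists_transcendental_normSq_eq hpos
  have hg : normSq t ∈ E₁.realSubfield := by
    rw [htg]
    exact mul_mem (hE₁.1 hm) (add_mem (pow_mem hxE₁ 2) (hE₁.1 hd))
  have htc := conj_mem_adjoin_of_normSq_mem hg
  let F := E₁.adjoin t htc
  have hEF : E ≤ F :=
    le_adjoin_adjoin hx ht hm hm0.ne' hd (fun _ ↦ sq_ne_neg_of_not_isQuaternionSquare hsq) hg htg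
  have hxF : x ∈ F.realSubfield := mem_adjoin_of_mem (hTc := htc) hxE₁
  have htF : (t : ℂ) ∈ F := mem_adjoin_self (hTc := htc)
  refine ⟨F, hEF, .inr ⟨x, hxF, normSq (t / m), ⟨t / m, div_mem htF (hEF.1 hm), rfl⟩, ?_⟩⟩
  rw [normSq_div, htg, normSq_ofReal]
  field_simp
  ring

theorem exists_forall_le_of_monotone {f : ℕ → ConjStableSubfield} (hf : Monotone f) :
    ∃ F : ConjStableSubfield, (∀ n, f n ≤ F) ∧ ∀ z ∈ F, ∃ n, z ∈ f n := by
  have hdir : Directed (· ≤ ·) fun n ↦ (f n).toSubfield :=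
    Monotone.directed_le fun _ _ h ↦ (hf h).1
  have hmem {z : ℂ} : z ∈ ⨆ n, (f n).toSubfield ↔ ∃ n, z ∈ f n :=
    Subfield.mem_iSup_of_directed hdir
  let F : ConjStableSubfield :=
    { toSubfield := ⨆ n, (f n).toSubfield
      countable' := by
        change ((⨆ n, (f n).toSubfield : Subfield ℂ) : Set ℂ).Countable
        rw [Subfield.coe_iSup_of_directed hdir]
        exact Set.countable_iUnion fun n ↦ (f n).countable'
      I_mem' := hmem.2 ⟨0, (f 0).I_mem⟩
      conj_mem' := fun hz ↦
        let ⟨n, hn⟩ := hmem.1 hz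
        hmem.2 ⟨n, conj_mem hn⟩ }
  refine ⟨F, fun n ↦ ⟨fun z hz ↦ hmem.2 ⟨n, hz⟩, ?_⟩, fun z ↦ hmem.1⟩
  rintro b hb ⟨z, hz, hzb⟩
  obtain ⟨k, hk⟩ := hmem.1 hz
  exact (hf (le_max_left n k)).2 b hb ⟨z, (hf (le_max_right n k)).1 hk, hzb⟩

theorem exists_ge_forall_mem_isQuaternionSquare (E : ConjStableSubfield) :
    ∃ F, E ≤ F ∧ ∀ m ∈ E.realSubfield, ∀ d ∈ E.realSubfield, 0 < m →
      F.IsQuaternionSquare m d := by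
  have : Countable E.realSubfield :=
    Function.Injective.countable (f := fun b ↦ (⟨(b : ℝ), b.2⟩ : E)) fun _ _ h ↦
      Subtype.ext (ofReal_injective (congrArg Subtype.val h))
  have := Encodable.ofCountable (E.realSubfield × E.realSubfield)
  let S (c : E.realSubfield × E.realSubfield) : Order.Cofinal ConjStableSubfield :=
    { carrier := {F | E ≤ F → 0 < (c.1 : ℝ) → F.IsQuaternionSquare c.1 c.2}
      isCofinal := fun F ↦ by
        by_cases h : E ≤ F ∧ 0 < (c.1 : ℝ)
        · obtain ⟨G, hFG, hG⟩ := exists_ge_isQuaternionSquare (h.1.1 c.1.2) h.2 (h.1.1 c.2.2)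
          exact ⟨G, fun _ _ ↦ hG, hFG⟩
        · exact ⟨F, fun hEF hc ↦ absurd ⟨hEF, hc⟩ h, le_rfl⟩ }
  have hmono := Order.sequenceOfCofinals.monotone E S
  obtain ⟨F, hF, -⟩ := exists_forall_le_of_monotone hmono
  refine ⟨F, hF 0, fun m hm d hd hm0 ↦ ?_⟩
  have hmem := Order.sequenceOfCofinals.encode_mem E S (⟨m, hm⟩, ⟨d, hd⟩)
  exact (hmem (hmono (Nat.zero_le _)) hm0).mono (hF _)

theorem exists_ge_forall_isQuaternionSquare (E : ConjStableSubfield) :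
    ∃ F, E ≤ F ∧ ∀ m ∈ F.realSubfield, ∀ d ∈ F.realSubfield, 0 < m →
      F.IsQuaternionSquare m d := by
  choose next hnext_le hnext using exists_ge_forall_mem_isQuaternionSquare
  let f (n : ℕ) : ConjStableSubfield := next^[n] E
  have hsucc (n : ℕ) : f (n + 1) = next (f n) := Function.iterate_succ_apply' next n E
  have hf : Monotone f := monotone_nat_of_le_succ fun n ↦ (hsucc n).symm ▸ hnext_le (f n)
  obtain ⟨F, hfF, hF⟩ := exists_forall_le_of_monotone hf
  refine ⟨F, hfF 0, fun m hm d hd hm0 ↦ ?_⟩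
  obtain ⟨k, hk⟩ := hF m hm
  obtain ⟨l, hl⟩ := hF d hd
  have hmd := hnext (f (max k l)) m ((hf (le_max_left k l)).1 hk) d
    ((hf (le_max_right k l)).1 hl) hm0
  rw [← hsucc] at hmd
  exact hmd.mono (hfF _)

/-- The field `K(i)` for a countable subfield `K` of `ℝ`. -/
noncomputable def ofRealSubfield (K : Subfield ℝ) (hK : (K : Set ℝ).Countable) :
    ConjStableSubfield where
  carrier := {z | z.re ∈ K ∧ z.im ∈ K}
  zero_mem' := ⟨K.zero_mem, K.zero_mem⟩
  one_mem' := ⟨K.one_mem, K.zero_mem⟩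
  add_mem' hz hw := ⟨add_mem hz.1 hw.1, add_mem hz.2 hw.2⟩
  neg_mem' hz := ⟨neg_mem hz.1, neg_mem hz.2⟩
  mul_mem' hz hw :=
    ⟨sub_mem (mul_mem hz.1 hw.1) (mul_mem hz.2 hw.2),
      add_mem (mul_mem hz.1 hw.2) (mul_mem hz.2 hw.1)⟩
  inv_mem' z hz := by
    have hnorm : normSq z ∈ K := add_mem (mul_mem hz.1 hz.1) (mul_mem hz.2 hz.2)
    exact ⟨inv_re z ▸ div_mem hz.1 hnorm, inv_im z ▸ div_mem (neg_mem hz.2) hnorm⟩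
  countable' := (hK.prod hK).preimage_of_injOn equivRealProd.injective.injOn
  I_mem' := ⟨K.zero_mem, K.one_mem⟩
  conj_mem' hz := ⟨hz.1, neg_mem hz.2⟩

theorem IsQuaternionSquare.isSquare_algebraMap {m d : E.realSubfield}
    (h : E.IsQuaternionSquare m d) :
    IsSquare (algebraMap E.realSubfield ℍ[E.realSubfield,-1,0,m] d) := by
  obtain ⟨a, ha, hda⟩ | ⟨a, ha, n, hn, hda⟩ := h
  · have hd : d = ⟨a, ha⟩ ^ 2 := Subtype.ext hda
    rw [hd, map_pow]
    exact IsSquare.sq _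
  · obtain ⟨y, z, rfl⟩ := mem_norms_iff.1 hn
    have hd : d = -⟨a, ha⟩ ^ 2 + m * (y ^ 2 + z ^ 2) := Subtype.ext hda
    refine ⟨⟨0, ⟨a, ha⟩, y, z⟩, ?_⟩
    rw [hd, QuaternionAlgebra.algebraMap_eq]
    ext1 <;> simp only [QuaternionAlgebra.mk_mul_mk] <;> ring

end ConjStableSubfield

theorem exists_subfield_forall_isSquare_algebraMap_quaternionAlgebra :
    ∃ K : Subfield ℝ,
      (∀ n : ℕ, (∀ r s : ℚ, r ^ 2 + s ^ 2 ≠ n) → ∀ r s : K, r ^ 2 + s ^ 2 ≠ n) ∧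
      ∀ m d : K, 0 < m → IsSquare (algebraMap K ℍ[K,-1,0,m] d) := by
  let Q : Subfield ℝ := (Rat.castHom ℝ).fieldRange
  obtain ⟨E, hE, hsq⟩ := ConjStableSubfield.exists_ge_forall_isQuaternionSquare
    (.ofRealSubfield Q (Set.countable_range _))
  refine ⟨E.realSubfield, fun n hn r s hrs ↦ ?_,
    fun m d hm ↦ (hsq m m.2 d d.2 hm).isSquare_algebraMap⟩
  have hnE : (n : ℝ) ∈ E.norms := ConjStableSubfield.mem_norms_iff.2
    ⟨r, s, congrArg Subtype.val hrs⟩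
  obtain ⟨z, ⟨⟨x, hx⟩, ⟨y, hy⟩⟩, hz⟩ := hE.2 n (natCast_mem _ n) hnE
  refine hn x y (Rat.cast_injective (α := ℝ) ?_)
  push_cast
  rw [← hz, normSq_apply, ← hx, ← hy]
  simp only [eq_ratCast, sq]

theorem sq_add_sq_ne_natCast_of_not_even_padicValNat {q n : ℕ} [hq : Fact q.Prime]
    (hq3 : q % 4 = 3) (hn : ¬ Even (padicValNat q n)) (r s : ℚ) : r ^ 2 + s ^ 2 ≠ n := by
  intro h
  have hn0 : n ≠ 0 := by
    rintro rfl
    exact hn (by rw [padicValNat_zero_right]; exact Even.zero)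
  let N := r.den * s.den
  have hN : N ^ 2 ≠ 0 := pow_ne_zero 2 (mul_ne_zero r.den_ne_zero s.den_ne_zero)
  have hsum : N ^ 2 * n = (r.num * s.den).natAbs ^ 2 + (s.num * r.den).natAbs ^ 2 := by
    rw [← Nat.cast_inj (R := ℤ)]
    push_cast
    rw [sq_abs, sq_abs, ← Int.cast_inj (α := ℚ)]
    push_cast [N]
    rw [← r.mul_den_eq_num, ← s.mul_den_eq_num, ← h]
    ring
  have heven : Even (padicValNat q (N ^ 2 * n)) := by
    by_cases hqn : q ∈ (N ^ 2 * n).primeFactors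
    · exact Nat.eq_sq_add_sq_iff.1 ⟨_, _, hsum⟩ q hqn hq3
    · rw [padicValNat.eq_zero_of_not_dvd fun hdvd ↦
        hqn (Nat.mem_primeFactors.2 ⟨hq.out, hdvd, mul_ne_zero hN hn0⟩)]
      exact Even.zero
  rw [padicValNat.mul hN hn0, padicValNat.pow] at heven
  exact hn ((Nat.even_add.1 heven).1 (even_two_mul _))

section QuadraticExtension

variable {K F A : Type*} [Field K] [Field F] [Algebra K F] [Ring A] [Algebra K A]

theorem exists_eq_X_add_C_sq_sub_C [NeZero (2 : K)] {p : K[X]} (hp : p.Monic)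
    (hp2 : p.natDegree = 2) : ∃ b d, p = (X + C b) ^ 2 - C d := by
  refine ⟨p.coeff 1 / 2, (p.coeff 1 / 2) ^ 2 - p.coeff 0, ?_⟩
  have hlin : C (p.coeff 1) = 2 * C (p.coeff 1 / 2) := by
    rw [← map_ofNat C 2, ← C_mul, mul_div_cancel₀ _ two_ne_zero]
  conv_lhs => rw [hp.as_sum, hp2, Finset.sum_range_succ, Finset.sum_range_one, hlin]
  rw [C_sub, C_pow]
  ring

theorem nonempty_powerBasis_of_finrank_prime (hF : (Module.finrank K F).Prime) :
    Nonempty (PowerBasis K F) := by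
  have := Subalgebra.isSimpleOrder_of_finrank_prime K F hF
  have : FiniteDimensional K F := Module.finite_of_finrank_pos hF.pos
  obtain ⟨θ, -, hθ⟩ := SetLike.exists_of_lt (bot_lt_top : (⊥ : Subalgebra K F) < ⊤)
  refine ⟨.ofAdjoinEqTop (Algebra.IsIntegral.isIntegral θ) ?_⟩
  exact (eq_bot_or_eq_top _).resolve_left fun h ↦
    hθ (h ▸ Algebra.self_mem_adjoin_singleton K θ)

theorem nonempty_algHom_of_forall_isSquare [NeZero (2 : K)] (hF : Module.finrank K F = 2)
    (hA : ∀ d : K, IsSquare (algebraMap K A d)) : Nonempty (F →ₐ[K] A) := by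
  obtain ⟨pb⟩ := nonempty_powerBasis_of_finrank_prime (hF ▸ Nat.prime_two)
  obtain ⟨b, d, hbd⟩ := exists_eq_X_add_C_sq_sub_C (minpoly.monic pb.isIntegral_gen)
    (by rw [pb.natDegree_minpoly, ← pb.finrank, hF])
  obtain ⟨q, hq⟩ := hA d
  refine ⟨pb.lift (q - algebraMap K A b) ?_⟩
  rw [hbd, map_sub, map_pow, map_add, aeval_X, aeval_C, aeval_C, sub_add_cancel, hq, sq, sub_self]

end QuadraticExtension

theorem exists_ne_zero_semiconjBy_of_mul_self_eq {R : Type*} [Ring R] {x y j : R}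
    (hxy : x * x = y * y) (hj : j ≠ 0) (hjx : SemiconjBy j x (-x)) :
    ∃ u ≠ 0, SemiconjBy u y x := by
  by_cases h : x + y = 0
  · refine ⟨j, hj, ?_⟩
    rw [eq_neg_of_add_eq_zero_right h]
    simpa only [neg_neg] using hjx.neg_right
  · exact ⟨x + y, h, by rw [SemiconjBy, add_mul, mul_add, ← hxy, add_comm]⟩

theorem semiconjBy_basis_j_i {R A : Type*} [CommRing R] [Ring A] [Algebra R A] {c a : R}
    (B : QuaternionAlgebra.Basis A c 0 a) :
    SemiconjBy B.j B.i (-B.i) := by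
  rw [SemiconjBy, B.j_mul_i, zero_smul, zero_sub, neg_mul, B.i_mul_j]

section Quaternion

variable {K : Type*} [Field K] [NeZero (2 : K)] {a b c m : K}

theorem eq_zero_of_sq_add_sq_eq_zero (hm : ∀ r s : K, r ^ 2 + s ^ 2 ≠ m) {r s : K}
    (h : r ^ 2 + s ^ 2 = 0) : r = 0 := by
  by_contra hr
  have hI : (s / r) ^ 2 = -1 := by
    field_simp
    linear_combination h
  -- If `-1` is a square, then every element is a sum of two squares.
  refine hm ((m + 1) / 2) (s / r * ((m - 1) / 2)) ?_
  rw [mul_pow, hI]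
  field_simp
  ring

theorem isUnit_or_eq_zero_of_forall_sq_add_sq_ne (hm : ∀ r s : K, r ^ 2 + s ^ 2 ≠ m)
    (x : ℍ[K,-1,0,m]) : IsUnit x ∨ x = 0 := by
  let n := x.re ^ 2 + x.imI ^ 2 - m * (x.imJ ^ 2 + x.imK ^ 2)
  have hn : x * star x = algebraMap K _ n := by
    rw [QuaternionAlgebra.algebraMap_eq]
    ext <;> simp <;> ring
  by_cases hn0 : n = 0
  · right
    have hJK : x.imJ ^ 2 + x.imK ^ 2 = 0 := by
      by_contra hJK
      apply hm ((x.re * x.imJ + x.imI * x.imK) / (x.imJ ^ 2 + x.imK ^ 2))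
        ((x.re * x.imK - x.imI * x.imJ) / (x.imJ ^ 2 + x.imK ^ 2))
      field_simp
      linear_combination (x.imJ ^ 2 + x.imK ^ 2) * hn0
    have hRI : x.re ^ 2 + x.imI ^ 2 = 0 := by linear_combination hn0 + m * hJK
    ext
    · exact eq_zero_of_sq_add_sq_eq_zero hm hRI
    · exact eq_zero_of_sq_add_sq_eq_zero hm (s := x.re) (by rw [add_comm, hRI])
    · exact eq_zero_of_sq_add_sq_eq_zero hm hJK
    · exact eq_zero_of_sq_add_sq_eq_zero hm (s := x.imJ) (by rw [add_comm, hJK])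
  · left
    have hunit : IsUnit (x * star x) := hn ▸ (IsUnit.mk0 n hn0).map _
    exact ((Commute.isUnit_mul_iff (star_comm_self (x := x)).symm).1 hunit).1

theorem center_quaternionAlgebra_eq_bot : Subalgebra.center K ℍ[K,-1,0,m] = ⊥ := by
  refine eq_bot_iff.2 fun x hx ↦ Algebra.mem_bot.2 ⟨x.re, ?_⟩
  have hi := Subalgebra.mem_center_iff.1 hx (QuaternionAlgebra.Basis.self K).i
  have hj := Subalgebra.mem_center_iff.1 hx (QuaternionAlgebra.Basis.self K).j
  have hI : x.imI = 0 := by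
    simpa [neg_eq_iff_add_eq_zero, ← two_mul, NeZero.ne] using congrArg QuaternionAlgebra.imK hj
  have hJ : x.imJ = 0 := by
    simpa [eq_neg_iff_add_eq_zero, ← two_mul, NeZero.ne] using congrArg QuaternionAlgebra.imK hi
  have hK : x.imK = 0 := by
    simpa [neg_eq_iff_add_eq_zero, ← two_mul, NeZero.ne] using congrArg QuaternionAlgebra.imJ hi
  ext <;> simp [hI, hJ, hK]

theorem exists_mul_sq_add_sq_eq_of_semiconjBy {w : ℍ[K,-1,0,b]}
    (hw : SemiconjBy w (QuaternionAlgebra.Basis.self K).i (-(QuaternionAlgebra.Basis.self K).i))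
    (hwc : w * w = algebraMap K _ c) : ∃ r s, b * (r ^ 2 + s ^ 2) = c := by
  have hre : w.re = 0 := by
    simpa [eq_neg_iff_add_eq_zero, ← two_mul, NeZero.ne] using congrArg QuaternionAlgebra.imI hw.eq
  have him : w.imI = 0 := by
    simpa [neg_eq_iff_add_eq_zero, ← two_mul, NeZero.ne] using congrArg QuaternionAlgebra.re hw.eq
  refine ⟨w.imJ, w.imK, ?_⟩
  calc b * (w.imJ ^ 2 + w.imK ^ 2) = (w * w).re := by
        rw [QuaternionAlgebra.re_mul, hre, him]
        ring
    _ = c := congrArg QuaternionAlgebra.re hwc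

theorem exists_sq_add_sq_eq_mul_of_basis (B : QuaternionAlgebra.Basis ℍ[K,-1,0,b] (-1) 0 a)
    (hb : ∀ r s : K, r ^ 2 + s ^ 2 ≠ b) : ∃ r s : K, r ^ 2 + s ^ 2 = a * b := by
  let S : QuaternionAlgebra.Basis ℍ[K,-1,0,b] (-1) 0 b := .self K
  have hj : S.j ≠ 0 := fun h ↦ one_ne_zero (congrArg QuaternionAlgebra.imJ h)
  obtain ⟨u, hu0, hu⟩ := exists_ne_zero_semiconjBy_of_mul_self_eq
    (x := S.i) (y := B.i) (by simp only [QuaternionAlgebra.Basis.i_mul_i, zero_smul])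
    hj (semiconjBy_basis_j_i S)
  lift u to ℍ[K,-1,0,b]ˣ using (isUnit_or_eq_zero_of_forall_sq_add_sq_ne hb u).resolve_right hu0
  have hw : SemiconjBy (u * (B.j * ↑u⁻¹)) S.i (-S.i) :=
    hu.neg_right.mul_left ((semiconjBy_basis_j_i B).mul_left hu.units_inv_symm_left)
  have hww : u * (B.j * ↑u⁻¹) * (u * (B.j * ↑u⁻¹)) = algebraMap K _ a := by
    calc u * (B.j * ↑u⁻¹) * (u * (B.j * ↑u⁻¹)) = u * (B.j * B.j) * ↑u⁻¹ := by
          simp only [mul_assoc, Units.inv_mul_cancel_left]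
      _ = algebraMap K _ a := by
          rw [B.j_mul_j, ← Algebra.algebraMap_eq_smul_one, ← Algebra.commutes, mul_assoc,
            Units.mul_inv, mul_one]
  obtain ⟨r, s, hrs⟩ := exists_mul_sq_add_sq_eq_of_semiconjBy hw hww
  exact ⟨b * r, b * s, by rw [← hrs]; ring⟩

end Quaternion

/-- there exist a field `K` of characteristic 0 and two quaternion division
algebras over `K` (central division `K`-algebras of degree 2) which are not `K`-isomorphic
but have the same quadratic subfields; in particular the genus of a quaternion division
algebra can contain more than one class. -/
theorem exists_nonisomorphic_quaternion_algebras_with_same_quadratic_subfields :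
    ∃ (K : Type) (_ : Field K), CharZero K ∧
      ∃ (D₁ D₂ : Type) (_ : DivisionRing D₁) (_ : Algebra K D₁)
        (_ : DivisionRing D₂) (_ : Algebra K D₂),
        FiniteDimensional K D₁ ∧ Subalgebra.center K D₁ = ⊥ ∧ Module.finrank K D₁ = 4 ∧
        FiniteDimensional K D₂ ∧ Subalgebra.center K D₂ = ⊥ ∧ Module.finrank K D₂ = 4 ∧
        IsEmpty (D₁ ≃ₐ[K] D₂) ∧
        (∀ (F : Type) [Field F] [Algebra K F], Module.finrank K F = 2 →
          (Nonempty (F →ₐ[K] D₁) ↔ Nonempty (F →ₐ[K] D₂))) := by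
  obtain ⟨K, hK, hsq⟩ := exists_subfield_forall_isSquare_algebraMap_quaternionAlgebra
  have : Fact (Nat.Prime 7) := ⟨by norm_num⟩
  have h3 := hK 3 (sq_add_sq_ne_natCast_of_not_even_padicValNat (q := 3) rfl (by simp))
  have h7 := hK 7 (sq_add_sq_ne_natCast_of_not_even_padicValNat (q := 7) rfl (by simp))
  have h21 := hK (3 * 7)
    (sq_add_sq_ne_natCast_of_not_even_padicValNat (q := 3) rfl (by decide +kernel))
  refine ⟨K, inferInstance, inferInstance, ℍ[K,-1,0,(3 : ℕ)], ℍ[K,-1,0,(7 : ℕ)],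
    .ofIsUnitOrEqZero (isUnit_or_eq_zero_of_forall_sq_add_sq_ne h3),
    inferInstanceAs (Algebra K ℍ[K,-1,0,(3 : ℕ)]),
    .ofIsUnitOrEqZero (isUnit_or_eq_zero_of_forall_sq_add_sq_ne h7),
    inferInstanceAs (Algebra K ℍ[K,-1,0,(7 : ℕ)]),
    inferInstanceAs (Module.Finite K ℍ[K,-1,0,(3 : ℕ)]), center_quaternionAlgebra_eq_bot,
    QuaternionAlgebra.finrank_eq_four _ _ _,
    inferInstanceAs (Module.Finite K ℍ[K,-1,0,(7 : ℕ)]), center_quaternionAlgebra_eq_bot,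
    QuaternionAlgebra.finrank_eq_four _ _ _, ⟨fun φ ↦ ?_⟩, fun F _ _ hF ↦ iff_of_true ?_ ?_⟩
  · obtain ⟨r, s, hrs⟩ := exists_sq_add_sq_eq_mul_of_basis
      ((QuaternionAlgebra.Basis.self K).compHom φ.toAlgHom) h7
    exact h21 r s (by rw [hrs, Nat.cast_mul])
  · exact nonempty_algHom_of_forall_isSquare hF fun d ↦ hsq _ d (by positivity)
  · exact nonempty_algHom_of_forall_isSquare hF fun d ↦ hsq _ d (by positivity)
end

section
/- There exists a field K of characteristic 0 and an infinite sequence D₁, D₂, D₃, … of quaternion division algebras over K (central division K-algebras of degree 2) that are pairwise non-isomorphic as K-algebras, yet any two of them have the same quadratic subfields: for every field extension F/K of degree 2 and all indices i, j, there is a K-algebra embedding F → D_i if and only if there is a K-algebra embedding F → D_j. In particular, the genus of a quaternion division algebra over K can be infinite. -/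
/-- A bundled central division algebra of degree `n` over `K`. -/
structure CentralDivAlg (K : Type) [Field K] (n : ℕ) : Type 1 where
  carrier : Type
  [divisionRing : DivisionRing carrier]
  [algebra : Algebra K carrier]
  [findim : FiniteDimensional K carrier]
  central : Subalgebra.center K carrier = ⊥
  degree_eq : Module.finrank K carrier = n ^ 2

attribute [instance] CentralDivAlg.divisionRing CentralDivAlg.algebra CentralDivAlg.findim

/-!
The algebra `(-1, r)` over a field `K` of characteristic not two is a division algebra as soon as
`r` is not a sum of two squares, and `(-1, r)` and `(-1, s)` are not isomorphic if `r * s` is not a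
sum of two squares either. For `r = p` and `s = q` distinct primes congruent to `3` modulo `4`,
this applies to `K = ℚ`, hence to every extension of `ℚ` in which no further rational number becomes
a sum of two squares.

Such an extension can be chosen large enough that every `d` is a square in every `(-1, r)`, so that
all these algebras contain all quadratic extensions. A square root of `d` is provided by a point of
the quadric `d = r (z² + w²) - x²`, and over its function field no element `s` becomes a sum of two
squares: otherwise a theorem of Cassels and Pfister, applied to the conic
`z² + w² = (x² + d) / r` over `K(x)`, would make `s (x² + d) / r` a sum of two squares in `K(x)`,
but when `d` and `-1` are not squares in `K` the algebra `(-1, s (x² + d) / r)` ramifies at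
`x² + d`. Repeating this inside `ℂ`, starting from `ℚ`, and passing to the union gives the field.
-/

open Polynomial IntermediateField
open QuadraticMap (weightedSumSquares weightedSumSquares_apply polar polar_smul_left
  polar_smul_right)
open scoped IntermediateField Quaternion

section SumTwoSq

/-- `s` is a sum of two squares in `R`. For `s ≠ 0` in a field of characteristic not two, this says
that the quaternion algebra `(-1, s)` splits. -/
def IsSumTwoSq {R : Type*} [Semiring R] (s : R) : Prop :=
  ∃ x y : R, s = x ^ 2 + y ^ 2

theorem IsSumTwoSq.map {R S : Type*} [Semiring R] [Semiring S] {s : R} (hs : IsSumTwoSq s)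
    (f : R →+* S) : IsSumTwoSq (f s) := by
  obtain ⟨x, y, rfl⟩ := hs
  exact ⟨f x, f y, by simp only [map_add, map_pow]⟩

variable {K : Type*} [Field K]

theorem isSumTwoSq_of_isSquare_neg_one [NeZero (2 : K)] (h : IsSquare (-1 : K)) (s : K) :
    IsSumTwoSq s := by
  obtain ⟨i, hi⟩ := h
  have h2 : (2 : K) ≠ 0 := two_ne_zero
  refine ⟨(s + 1) / 2, i * (s - 1) / 2, ?_⟩
  field_simp
  linear_combination (s - 1) ^ 2 * hi

theorem neZero_two_of_not_isSquare_neg_one (h : ¬ IsSquare (-1 : K)) : NeZero (2 : K) :=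
  ⟨fun h2 => h ⟨1, by linear_combination -h2⟩⟩

theorem eq_zero_of_sq_add_sq_eq_zero_s11 (h : ¬ IsSquare (-1 : K)) {x y : K}
    (hxy : x ^ 2 + y ^ 2 = 0) : x = 0 ∧ y = 0 := by
  have hy : y = 0 := by
    by_contra hy
    refine h ⟨x / y, ?_⟩
    field_simp
    linear_combination -hxy
  subst hy
  simpa using hxy

theorem IsSumTwoSq.of_sq_mul {s t : K} (ht : t ≠ 0) (h : IsSumTwoSq (t ^ 2 * s)) :
    IsSumTwoSq s := by
  obtain ⟨x, y, hxy⟩ := h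
  refine ⟨x / t, y / t, ?_⟩
  field_simp
  linear_combination hxy

end SumTwoSq

section Ramification

variable {R : Type*} [CommRing R] [IsDomain R] {p m : R}

theorem pow_dvd_of_mul_sq_eq_sq_add_sq (hp0 : p ≠ 0)
    (hp : ∀ u v : R, p ∣ u ^ 2 + v ^ 2 → p ∣ u ∧ p ∣ v) (hm : IsCoprime p m) (n : ℕ)
    {d u v : R} (h : p * m * d ^ 2 = u ^ 2 + v ^ 2) : p ^ n ∣ d := by
  induction n generalizing d u v with
  | zero => simp
  | succ n ih =>
    obtain ⟨⟨u, rfl⟩, ⟨v, rfl⟩⟩ := hp u v ⟨m * d ^ 2, by rw [← h, mul_assoc]⟩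
    have hd : m * d ^ 2 = p * (u ^ 2 + v ^ 2) :=
      mul_left_cancel₀ hp0 (by linear_combination h)
    obtain ⟨d, rfl⟩ : p ∣ d :=
      (hp d 0 (by simpa using hm.dvd_of_dvd_mul_left ⟨_, hd⟩)).1
    rw [pow_succ']
    exact mul_dvd_mul_left p (ih (u := u) (v := v)
      (mul_left_cancel₀ hp0 (by linear_combination hd)))

-- The quaternion algebra `(-1, p * m)` is ramified at `p`.
theorem not_isSumTwoSq_algebraMap_mul {F : Type*} [WfDvdMonoid R] [Field F] [Algebra R F]
    [IsFractionRing R F] (hp0 : p ≠ 0) (hpu : ¬ IsUnit p)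
    (hp : ∀ u v : R, p ∣ u ^ 2 + v ^ 2 → p ∣ u ∧ p ∣ v) (hm : IsCoprime p m) :
    ¬ IsSumTwoSq (algebraMap R F (p * m)) := by
  rintro ⟨x, y, h⟩
  obtain ⟨u, d, hd, rfl⟩ := IsFractionRing.div_surjective R x
  obtain ⟨v, e, he, rfl⟩ := IsFractionRing.div_surjective R y
  have hd0 : algebraMap R F d ≠ 0 := IsFractionRing.to_map_ne_zero_of_mem_nonZeroDivisors hd
  have he0 : algebraMap R F e ≠ 0 := IsFractionRing.to_map_ne_zero_of_mem_nonZeroDivisors he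
  have hde : d * e ≠ 0 := nonZeroDivisors.ne_zero (mul_mem hd he)
  have huv : p * m * (d * e) ^ 2 = (u * e) ^ 2 + (v * d) ^ 2 := by
    apply IsFractionRing.injective R F
    simp only [map_mul, map_pow, map_add] at h ⊢
    rw [h]
    field_simp
  obtain ⟨n, hn⟩ := FiniteMultiplicity.of_not_isUnit hpu hde
  exact hn (pow_dvd_of_mul_sq_eq_sq_add_sq hp0 hp hm (n + 1) huv)

end Ramification

section CasselsPfister

theorem map_smul_add_smul_eq_of_map_eq_mul {R M : Type*} [CommRing R] [IsDomain R]
    [AddCommGroup M] [Module R M] (Q : QuadraticForm R M) {d d' f : R} {a b : M} (hd : d ≠ 0)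
    (hab : Q (d • a + b) = d ^ 2 * f) (hb : Q b = d * d') :
    Q (d' • a + (Q a - f) • b) = d' ^ 2 * f := by
  have hab' : d * Q a + polar Q a b + d' = d * f := by
    apply mul_left_cancel₀ hd
    rw [QuadraticMap.map_add Q, QuadraticMap.map_smul, polar_smul_left, smul_eq_mul, smul_eq_mul,
      hb] at hab
    linear_combination hab
  rw [QuadraticMap.map_add Q, QuadraticMap.map_smul, QuadraticMap.map_smul, polar_smul_left,
    polar_smul_right, hb]
  simp only [smul_eq_mul]
  linear_combination d' * (Q a - f) * hab'

variable {ι k : Type*} [Fintype ι] [Field k] {w : ι → k} {v : ι → k[X]} {n : ℕ}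

theorem natDegree_weightedSumSquares_le (hv : ∀ i, (v i).natDegree ≤ n) :
    (weightedSumSquares k[X] w v).natDegree ≤ 2 * n := by
  rw [weightedSumSquares_apply]
  refine natDegree_sum_le_of_forall_le _ _ fun i _ => (natDegree_smul_le _ _).trans ?_
  rw [← pow_two]
  exact natDegree_pow_le_of_le 2 (hv i)

theorem coeff_weightedSumSquares (hv : ∀ i, (v i).natDegree ≤ n) :
    (weightedSumSquares k[X] w v).coeff (2 * n) =
      weightedSumSquares k w fun i => (v i).coeff n := by
  simp only [weightedSumSquares_apply, finsetSum_coeff, coeff_smul, ← pow_two,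
    coeff_pow_of_natDegree_le (hv _)]

theorem natDegree_le_of_natDegree_weightedSumSquares_le
    (hw : (weightedSumSquares k w).Anisotropic)
    (h : (weightedSumSquares k[X] w v).natDegree ≤ 2 * n) (i : ι) : (v i).natDegree ≤ n := by
  have descend (j : ℕ) (hv : ∀ i, (v i).natDegree ≤ n + j) : ∀ i, (v i).natDegree ≤ n := by
    induction j with
    | zero => exact hv
    | succ j ih =>
      have top_zero : (fun i => (v i).coeff (n + (j + 1))) = 0 := hw _ <| by
        rw [← coeff_weightedSumSquares hv]
        exact coeff_eq_zero_of_natDegree_lt (by lia)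
      exact ih fun i => natDegree_le_pred (hv i) (congrFun top_zero i)
  refine descend (Finset.univ.sup fun i => (v i).natDegree) (fun i => ?_) i
  exact (Finset.le_sup (f := fun i => (v i).natDegree) (Finset.mem_univ i)).trans
    (Nat.le_add_left _ _)

theorem anisotropic_weightedSumSquares_polynomial
    (hw : (weightedSumSquares k w).Anisotropic) :
    (weightedSumSquares k[X] w).Anisotropic := by
  intro v hv
  have hdeg : ∀ i, (v i).natDegree ≤ 0 :=
    natDegree_le_of_natDegree_weightedSumSquares_le hw (by simp [hv])
  have const_zero : (fun i => (v i).coeff 0) = 0 := hw _ <| by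
    rw [← coeff_weightedSumSquares hdeg, hv, coeff_zero]
  funext i
  rw [eq_C_of_natDegree_le_zero (hdeg i), congrFun const_zero i]
  simp

theorem natDegree_lt_of_weightedSumSquares_eq_mul {d d' : k[X]} (hd : d ≠ 0) (hd' : d' ≠ 0)
    (hv : ∀ i, (v i).degree < d.degree) (h : weightedSumSquares k[X] w v = d * d') :
    d'.natDegree < d.natDegree := by
  have hlt (i : ι) (hi : v i ≠ 0) : (v i).natDegree < d.natDegree :=
    natDegree_lt_natDegree hi (hv i)
  have hd_pos : 0 < d.natDegree := by
    have hv0 : v ≠ 0 := by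
      rintro rfl
      simp [hd, hd'] at h
    obtain ⟨i, hi⟩ := Function.ne_iff.1 hv0
    exact (Nat.zero_le _).trans_lt (hlt i hi)
  have hle := natDegree_weightedSumSquares_le (w := w) (v := v) (n := d.natDegree - 1) fun i => by
    by_cases hi : v i = 0
    · simp [hi]
    · exact Nat.le_sub_one_of_lt (hlt i hi)
  rw [h, natDegree_mul hd hd'] at hle
  lia

-- Reflect `v / d` in the line joining it to the polynomial vector obtained by rounding: the new
-- denominator has smaller degree than `d`.
theorem exists_weightedSumSquares_eq_of_eq_sq_mul (hw : (weightedSumSquares k w).Anisotropic)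
    {d f : k[X]} (hd : d ≠ 0) (h : weightedSumSquares k[X] w v = d ^ 2 * f) :
    ∃ v' : ι → k[X], weightedSumSquares k[X] w v' = f := by
  induction hn : d.natDegree using Nat.strong_induction_on generalizing d v with
  | _ n ih =>
    subst hn
    set a : ι → k[X] := fun i => v i / d
    set b : ι → k[X] := fun i => v i % d
    have hv : v = d • a + b := funext fun i => (EuclideanDomain.div_add_mod (v i) d).symm
    have hb : d ∣ weightedSumSquares k[X] w b := by
      have hvb : weightedSumSquares k[X] w v = _ := congrArg _ hv
      rw [h, QuadraticMap.map_add (weightedSumSquares k[X] w), QuadraticMap.map_smul,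
        polar_smul_left, smul_eq_mul, smul_eq_mul] at hvb
      exact ⟨d * f - d * weightedSumSquares k[X] w a - polar (weightedSumSquares k[X] w) a b,
        by linear_combination -hvb⟩
    obtain ⟨d', hd'⟩ := hb
    by_cases hd'0 : d' = 0
    · have hb0 : b = 0 := anisotropic_weightedSumSquares_polynomial hw b (by simp [hd', hd'0])
      refine ⟨a, mul_left_cancel₀ (pow_ne_zero 2 hd) ?_⟩
      rw [← h, hv, hb0, add_zero, QuadraticMap.map_smul, smul_eq_mul, pow_two]
    have hdeg : d'.natDegree < d.natDegree :=
      natDegree_lt_of_weightedSumSquares_eq_mul hd hd'0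
        (fun i => EuclideanDomain.mod_lt (v i) hd) hd'
    exact ih _ hdeg hd'0 (map_smul_add_smul_eq_of_map_eq_mul _ hd (hv ▸ h) hd') rfl

theorem cassels_pfister {F : Type*} [Field F] [Algebra k F] [Algebra k[X] F]
    [IsScalarTower k k[X] F] [IsFractionRing k[X] F] (hw : (weightedSumSquares k w).Anisotropic)
    {f : k[X]} {x : ι → F} (h : weightedSumSquares F w x = algebraMap k[X] F f) :
    ∃ v : ι → k[X], weightedSumSquares k[X] w v = f := by
  obtain ⟨⟨d, hd⟩, hdx⟩ := IsLocalization.exist_integer_multiples_of_finite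
    (nonZeroDivisors k[X]) x
  choose v hv using hdx
  refine exists_weightedSumSquares_eq_of_eq_sq_mul hw (nonZeroDivisors.ne_zero hd) (v := v) ?_
  apply IsFractionRing.injective k[X] F
  rw [map_mul, ← h, weightedSumSquares_apply, weightedSumSquares_apply, Finset.mul_sum, map_sum]
  refine Finset.sum_congr rfl fun i _ => ?_
  have hvi : algebraMap k[X] F (v i) = algebraMap k[X] F d * x i :=
    (hv i).trans (Algebra.smul_def _ _)
  simp only [Algebra.smul_def, map_mul, map_pow, hvi, ← IsScalarTower.algebraMap_apply]
  ring

end CasselsPfister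

section RationalFunctions

variable {k : Type*} [Field k] {d e s c : k}

theorem not_isSquare_neg_one_of_not_isSumTwoSq [NeZero (2 : k)] (hs : ¬ IsSumTwoSq s) :
    ¬ IsSquare (-1 : k) :=
  fun h => hs (isSumTwoSq_of_isSquare_neg_one h s)

theorem anisotropic_one_one (h : ¬ IsSquare (-1 : k)) :
    (weightedSumSquares k ![(1 : k), 1]).Anisotropic := by
  intro v hv
  obtain ⟨h0, h1⟩ := eq_zero_of_sq_add_sq_eq_zero_s11 h (x := v 0) (y := v 1) <| by
    simpa [weightedSumSquares_apply, Fin.sum_univ_two, pow_two] using hv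
  funext i
  fin_cases i <;> assumption

theorem anisotropic_one_one_neg [NeZero (2 : k)] (hs : ¬ IsSumTwoSq s) :
    (weightedSumSquares k ![1, 1, -s]).Anisotropic := by
  intro v hv
  have hv' : v 0 ^ 2 + v 1 ^ 2 = v 2 ^ 2 * s := by
    simp only [weightedSumSquares_apply, Fin.sum_univ_three, Matrix.cons_val, smul_eq_mul] at hv
    linear_combination hv
  have h2 : v 2 = 0 := by
    by_contra h2
    exact hs (.of_sq_mul h2 ⟨_, _, hv'.symm⟩)
  obtain ⟨h0, h1⟩ := eq_zero_of_sq_add_sq_eq_zero_s11 (not_isSquare_neg_one_of_not_isSumTwoSq hs)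
    (hv'.trans (by simp [h2]))
  funext i
  fin_cases i <;> assumption

theorem exists_eq_X_sq_add_C_mul_add (a : k) (u : k[X]) :
    ∃ (q : k[X]) (u₀ u₁ : k), u = (X ^ 2 + C a) * q + (C u₁ * X + C u₀) := by
  have hdeg : (X ^ 2 + C a : k[X]).natDegree = 2 := natDegree_X_pow_add_C
  have hmod : (u % (X ^ 2 + C a)).natDegree ≤ 1 :=
    Nat.le_of_lt_succ ((natDegree_mod_lt u (by rw [hdeg]; exact two_ne_zero)).trans_eq hdeg)
  obtain ⟨u₁, u₀, h⟩ := exists_eq_X_add_C_of_natDegree_le_one hmod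
  exact ⟨u / (X ^ 2 + C a), u₀, u₁, by rw [← h, EuclideanDomain.div_add_mod]⟩

theorem eq_zero_of_X_sq_add_C_dvd {a x y : k} (h : X ^ 2 + C a ∣ C x * X + C y) :
    x = 0 ∧ y = 0 := by
  have h0 : C x * X + C y = 0 := eq_zero_of_dvd_of_natDegree_lt h <|
    natDegree_linear_le.trans_lt (by rw [natDegree_X_pow_add_C]; exact one_lt_two)
  exact ⟨by simpa using congrArg (coeff · 1) h0, by simpa using congrArg (coeff · 0) h0⟩

-- `u₀ + u₁ √-d` and `v₀ + v₁ √-d` have squares summing to zero only if `√-1 ∈ k(√-d)`.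
theorem eq_zero_of_sq_add_sq_eq_mul (h : ¬ IsSquare (-1 : k)) (hd : ¬ IsSquare d)
    {u₀ u₁ v₀ v₁ : k} (horth : u₀ * u₁ + v₀ * v₁ = 0)
    (hnorm : u₀ ^ 2 + v₀ ^ 2 = d * (u₁ ^ 2 + v₁ ^ 2)) :
    (u₀ = 0 ∧ u₁ = 0) ∧ v₀ = 0 ∧ v₁ = 0 := by
  have hn : u₁ ^ 2 + v₁ ^ 2 = 0 := by
    by_contra hn
    refine hd ⟨(u₁ * v₀ - v₁ * u₀) / (u₁ ^ 2 + v₁ ^ 2), ?_⟩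
    field_simp
    linear_combination (u₀ * u₁ + v₀ * v₁) * horth - (u₁ ^ 2 + v₁ ^ 2) * hnorm
  obtain ⟨rfl, rfl⟩ := eq_zero_of_sq_add_sq_eq_zero_s11 h hn
  obtain ⟨rfl, rfl⟩ := eq_zero_of_sq_add_sq_eq_zero_s11 h (x := u₀) (y := v₀) (by simpa using hnorm)
  simp

theorem X_sq_add_C_dvd_of_dvd_sq_add_sq (h : ¬ IsSquare (-1 : k)) (hd : ¬ IsSquare d)
    (u v : k[X]) (huv : X ^ 2 + C d ∣ u ^ 2 + v ^ 2) :
    X ^ 2 + C d ∣ u ∧ X ^ 2 + C d ∣ v := by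
  have := neZero_two_of_not_isSquare_neg_one h
  obtain ⟨q, u₀, u₁, rfl⟩ := exists_eq_X_sq_add_C_mul_add d u
  obtain ⟨r, v₀, v₁, rfl⟩ := exists_eq_X_sq_add_C_mul_add d v
  have hrem : X ^ 2 + C d ∣ C (2 * (u₀ * u₁ + v₀ * v₁)) * X +
      C (u₀ ^ 2 + v₀ ^ 2 - d * (u₁ ^ 2 + v₁ ^ 2)) := by
    refine (dvd_add_right (b := (X ^ 2 + C d) * ((X ^ 2 + C d) * (q ^ 2 + r ^ 2) +
      2 * q * (C u₁ * X + C u₀) + 2 * r * (C v₁ * X + C v₀) + C (u₁ ^ 2 + v₁ ^ 2)))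
      (dvd_mul_right _ _)).1 ?_
    convert huv using 1
    simp only [C_mul, C_add, C_sub, C_pow, map_ofNat]
    ring
  obtain ⟨hX, h1⟩ := eq_zero_of_X_sq_add_C_dvd hrem
  obtain ⟨⟨rfl, rfl⟩, rfl, rfl⟩ := eq_zero_of_sq_add_sq_eq_mul h hd
    ((mul_eq_zero.1 hX).resolve_left two_ne_zero) (sub_eq_zero.1 h1)
  simp

variable {F : Type*} [Field F] [Algebra k[X] F] [IsFractionRing k[X] F]

theorem not_isSumTwoSq_mul_X_sq_add_C (h : ¬ IsSquare (-1 : k)) (hd : ¬ IsSquare d)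
    (he : e ≠ 0) :
    ¬ IsSumTwoSq (algebraMap k[X] F ((X ^ 2 + C d) * C e)) := by
  have hdeg : (X ^ 2 + C d : k[X]).natDegree = 2 := natDegree_X_pow_add_C
  refine not_isSumTwoSq_algebraMap_mul (monic_X_pow_add_C d two_ne_zero).ne_zero
    (fun hu => ?_) (X_sq_add_C_dvd_of_dvd_sq_add_sq h hd)
    ((isCoprime_zero_left.2 (isUnit_C.2 he.isUnit)).of_isCoprime_of_dvd_left (dvd_zero _))
  simp [natDegree_eq_zero_of_isUnit hu] at hdeg

variable [Algebra k F] [IsScalarTower k k[X] F]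

theorem isSumTwoSq_of_isSumTwoSq_algebraMap [NeZero (2 : k)]
    (hs : IsSumTwoSq (algebraMap k F s)) : IsSumTwoSq s := by
  by_cases h : IsSquare (-1 : k)
  · exact isSumTwoSq_of_isSquare_neg_one h s
  obtain ⟨x, y, hxy⟩ := hs
  obtain ⟨v, hv⟩ := cassels_pfister (F := F) (anisotropic_one_one h) (f := C s) (x := ![x, y]) <| by
    rw [← Polynomial.algebraMap_eq, ← IsScalarTower.algebraMap_apply, hxy]
    simp [weightedSumSquares_apply, pow_two]
  refine ⟨(v 0).eval 0, (v 1).eval 0, ?_⟩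
  simpa [weightedSumSquares_apply, pow_two] using congrArg (eval 0) hv.symm

-- The reflection of `⟨1, 1, -s⟩` exchanging `(a₁, b₁, t₁)` and `(0, 0, 1)` maps `(a₀, b₀, t₀)` into
-- the plane `t = 0`.
theorem isSumTwoSq_of_orthogonal (h : ¬ IsSquare (-1 : k)) (hs : s ≠ 0) {a₀ b₀ t₀ a₁ b₁ t₁ : k}
    (h₀ : a₀ ^ 2 + b₀ ^ 2 - s * t₀ ^ 2 = e) (h₁ : a₁ ^ 2 + b₁ ^ 2 - s * t₁ ^ 2 = -s)
    (horth : a₁ * a₀ + b₁ * b₀ - s * t₁ * t₀ = 0) : IsSumTwoSq e := by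
  by_cases ht : t₁ = 1
  · subst ht
    obtain ⟨rfl, rfl⟩ := eq_zero_of_sq_add_sq_eq_zero_s11 h (x := a₁) (y := b₁)
      (by linear_combination h₁)
    obtain rfl : t₀ = 0 := by simpa [hs] using horth
    exact ⟨a₀, b₀, by linear_combination -h₀⟩
  · have ht' : 1 - t₁ ≠ 0 := sub_ne_zero.2 (Ne.symm ht)
    refine ⟨a₀ + t₀ * a₁ / (1 - t₁), b₀ + t₀ * b₁ / (1 - t₁), ?_⟩
    field_simp
    linear_combination (-(1 - t₁) ^ 2) * h₀ - t₀ ^ 2 * h₁ - 2 * t₀ * (1 - t₁) * horth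

theorem isSumTwoSq_mul_of_sq_add_sq_sub_eq [NeZero (2 : k)] (hs : ¬ IsSumTwoSq s) {x y t : F}
    (h : x ^ 2 + y ^ 2 - algebraMap k F s * t ^ 2 = algebraMap k[X] F (C s * (C c - X ^ 2))) :
    IsSumTwoSq (s * c) := by
  have hs0 : s ≠ 0 := by rintro rfl; exact hs ⟨0, 0, by simp⟩
  obtain ⟨v, hv⟩ := cassels_pfister (F := F) (anisotropic_one_one_neg hs) (x := ![x, y, t]) <| by
    rw [← h]
    simp [weightedSumSquares_apply, Fin.sum_univ_three, Algebra.smul_def, pow_two,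
      sub_eq_add_neg]
  have hlin := natDegree_le_of_natDegree_weightedSumSquares_le (v := v) (n := 1)
    (anisotropic_one_one_neg hs) (by rw [hv]; compute_degree)
  choose a₁ a₀ ha using fun i => exists_eq_X_add_C_of_natDegree_le_one (hlin i)
  have heval (x : k) : (a₁ 0 * x + a₀ 0) ^ 2 + (a₁ 1 * x + a₀ 1) ^ 2 - s * (a₁ 2 * x + a₀ 2) ^ 2 =
      s * (c - x ^ 2) := by
    simpa [weightedSumSquares_apply, Fin.sum_univ_three, ha, pow_two, sub_eq_add_neg] using
      congrArg (eval x) hv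
  have h2 : (2 : k) ≠ 0 := two_ne_zero
  have hconst : a₀ 0 ^ 2 + a₀ 1 ^ 2 - s * a₀ 2 ^ 2 = s * c := by linear_combination heval 0
  have hlead : a₁ 0 ^ 2 + a₁ 1 ^ 2 - s * a₁ 2 ^ 2 = -s :=
    mul_left_cancel₀ h2 (by linear_combination heval 1 + heval (-1) - 2 * heval 0)
  have hmid : a₁ 0 * a₀ 0 + a₁ 1 * a₀ 1 - s * a₁ 2 * a₀ 2 = 0 :=
    mul_left_cancel₀ (mul_ne_zero h2 h2) (by linear_combination heval 1 - heval (-1))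
  exact isSumTwoSq_of_orthogonal (not_isSquare_neg_one_of_not_isSumTwoSq hs) hs0 hconst hlead hmid

end RationalFunctions

section QuadraticExtension

variable {K L : Type*} [Field K] [Field L] [Algebra K L] {w : L} {m s : K}

theorem exists_eq_add_mul_gen_of_sq_eq (hw : w ^ 2 = algebraMap K L m) (u : K⟮w⟯) :
    ∃ a b : K, u = algebraMap K K⟮w⟯ a + algebraMap K K⟮w⟯ b * AdjoinSimple.gen K w := by
  have hroot : aeval w (X ^ 2 + C (-m)) = 0 := by simp [hw]
  have halg : IsAlgebraic K w := ⟨_, (monic_X_pow_add_C (-m) two_ne_zero).ne_zero, hroot⟩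
  obtain ⟨p, hp⟩ : ∃ p : K[X], aeval w p = u := by
    have hu : (u : L) ∈ K⟮w⟯.toSubalgebra := u.2
    rwa [adjoin_simple_toSubalgebra_of_isAlgebraic halg,
      Algebra.adjoin_singleton_eq_range_aeval] at hu
  obtain ⟨q, a, b, rfl⟩ := exists_eq_X_sq_add_C_mul_add (-m) p
  refine ⟨a, b, Subtype.ext ?_⟩
  rw [← hp, map_add, map_mul, hroot]
  simp [add_comm]

-- With `x = u₀ + u₁ w` and `y = v₀ + v₁ w`, comparing coefficients in `s = x² + y²` writes `s` as
-- `(u₁² + v₁²) (m + t²)`.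
theorem IsSumTwoSq.isSumTwoSq_or_exists_of_quadratic [NeZero (2 : K)]
    (hw : w ^ 2 = algebraMap K L m)
    (hspan : ∀ u : L, ∃ a b : K, u = algebraMap K L a + algebraMap K L b * w)
    (hs : IsSumTwoSq (algebraMap K L s)) :
    IsSumTwoSq s ∨ ∃ x y t : K, x ^ 2 + y ^ 2 - s * t ^ 2 = s * m := by
  have hinj := (algebraMap K L).injective
  obtain ⟨x, y, hxy⟩ := hs
  obtain ⟨u₀, u₁, rfl⟩ := hspan x
  obtain ⟨v₀, v₁, rfl⟩ := hspan y
  by_cases hwK : ∃ w₀, algebraMap K L w₀ = w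
  · obtain ⟨w₀, rfl⟩ := hwK
    exact .inl ⟨u₀ + u₁ * w₀, v₀ + v₁ * w₀, hinj (by simpa using hxy)⟩
  have hcoeff : algebraMap K L (2 * (u₀ * u₁ + v₀ * v₁)) * w =
      algebraMap K L (s - (u₀ ^ 2 + v₀ ^ 2) - m * (u₁ ^ 2 + v₁ ^ 2)) := by
    simp only [map_add, map_sub, map_mul, map_pow, map_ofNat, ← hw]
    linear_combination -hxy
  have horth : u₀ * u₁ + v₀ * v₁ = 0 := by
    by_contra h
    have h2 : algebraMap K L (2 * (u₀ * u₁ + v₀ * v₁)) ≠ 0 :=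
      (_root_.map_ne_zero _).2 (mul_ne_zero two_ne_zero h)
    exact hwK ⟨_, (map_div₀ _ _ _).trans ((div_eq_iff h2).2 (hcoeff.symm.trans (mul_comm _ _)))⟩
  have hs_eq : s = u₀ ^ 2 + v₀ ^ 2 + m * (u₁ ^ 2 + v₁ ^ 2) := by
    rw [horth, mul_zero, map_zero, zero_mul] at hcoeff
    linear_combination hinj (hcoeff.symm.trans (map_zero _).symm)
  by_cases hn : u₁ ^ 2 + v₁ ^ 2 = 0
  · exact .inl ⟨u₀, v₀, by rw [hs_eq, hn, mul_zero, add_zero]⟩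
  obtain ⟨t, hu₀, hv₀⟩ : ∃ t, u₀ = -t * v₁ ∧ v₀ = t * u₁ := by
    refine ⟨(u₁ * v₀ - v₁ * u₀) / (u₁ ^ 2 + v₁ ^ 2), ?_, ?_⟩
    · field_simp
      linear_combination u₁ * horth
    · field_simp
      linear_combination v₁ * horth
  refine .inr ⟨u₁ * (m + t ^ 2), v₁ * (m + t ^ 2), t, ?_⟩
  rw [hs_eq, hu₀, hv₀]
  ring

end QuadraticExtension

section SimpleTranscendental

variable {k E : Type*} [Field k] [Field E] [Algebra k E] {x z w : E} {c d e s : k}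

theorem neZero_two_of_algebra (K L : Type*) [Field K] [Field L] [Algebra K L] [NeZero (2 : K)] :
    NeZero (2 : L) :=
  ⟨map_ofNat (algebraMap K L) 2 ▸ (_root_.map_ne_zero (algebraMap K L)).2 two_ne_zero⟩

/-- The field homomorphism `f` creates no new sums of two squares. -/
def ReflectsSumTwoSq {K L : Type*} [Semiring K] [Semiring L] (f : K →+* L) : Prop :=
  ∀ s, IsSumTwoSq (f s) → IsSumTwoSq s

theorem reflectsSumTwoSq_adjoin_of_transcendental [NeZero (2 : k)] (hz : Transcendental k z) :
    ReflectsSumTwoSq (algebraMap k k⟮z⟯) := by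
  intro s hs
  apply isSumTwoSq_of_isSumTwoSq_algebraMap (F := RatFunc k)
  simpa using hs.map (RatFunc.algEquivOfTranscendental z hz).symm.toRingEquiv.toRingHom

theorem not_isSumTwoSq_of_transcendental (hx : Transcendental k x) (h : ¬ IsSquare (-1 : k))
    (hd : ¬ IsSquare d) (he : e ≠ 0) :
    ¬ IsSumTwoSq ((AdjoinSimple.gen k x ^ 2 + algebraMap k k⟮x⟯ d) * algebraMap k k⟮x⟯ e) := by
  intro hs
  apply not_isSumTwoSq_mul_X_sq_add_C (F := RatFunc k) h hd he
  simpa [RatFunc.algEquivOfTranscendental_symm_gen, RatFunc.algebraMap_eq_C] using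
    hs.map (RatFunc.algEquivOfTranscendental x hx).symm.toRingEquiv.toRingHom

theorem isSumTwoSq_mul_of_isSumTwoSq_adjoin_conic [NeZero (2 : k)] (hz : Transcendental k z)
    (hw : w ^ 2 = algebraMap k E c - z ^ 2) (hs : ¬ IsSumTwoSq s)
    (hsw : IsSumTwoSq (algebraMap k k⟮z⟯⟮w⟯ s)) : IsSumTwoSq (s * c) := by
  have : NeZero (2 : k⟮z⟯) := neZero_two_of_algebra k k⟮z⟯
  have hw' : AdjoinSimple.gen k⟮z⟯ w ^ 2 = algebraMap k⟮z⟯ k⟮z⟯⟮w⟯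
      (algebraMap k k⟮z⟯ c - AdjoinSimple.gen k z ^ 2) := Subtype.ext hw
  rw [IsScalarTower.algebraMap_apply k k⟮z⟯] at hsw
  rcases hsw.isSumTwoSq_or_exists_of_quadratic hw'
    (exists_eq_add_mul_gen_of_sq_eq (congrArg Subtype.val hw')) with hsz | ⟨x, y, t, h⟩
  · exact absurd (reflectsSumTwoSq_adjoin_of_transcendental hz s hsz) hs
  let φ := RatFunc.algEquivOfTranscendental z hz
  refine isSumTwoSq_mul_of_sq_add_sq_sub_eq (x := φ.symm x) (y := φ.symm y)
    (t := φ.symm t) hs ?_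
  simpa [RatFunc.algEquivOfTranscendental_symm_gen, RatFunc.algebraMap_eq_C, φ] using
    congrArg φ.symm h

end SimpleTranscendental

section Step

theorem isSquare_algebraMap_quaternionAlgebra_map {R S : Type*} [CommRing R] [CommRing S]
    (f : R →+* S) {a b r d : R} (h : IsSquare (algebraMap R ℍ[R,a,b,r] d)) :
    IsSquare (algebraMap S ℍ[S,f a,f b,f r] (f d)) := by
  obtain ⟨⟨w, x, y, z⟩, hq⟩ := h
  refine ⟨⟨f w, f x, f y, f z⟩, ?_⟩
  rw [QuaternionAlgebra.algebraMap_eq, QuaternionAlgebra.mk_mul_mk, QuaternionAlgebra.mk.injEq]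
    at hq ⊢
  obtain ⟨hre, hi, hj, hk⟩ := hq
  exact ⟨by simpa using congrArg f hre, by simpa using congrArg f hi, by simpa using congrArg f hj,
    by simpa using congrArg f hk⟩

theorem isSquare_algebraMap_quaternionAlgebra_of_eq {R : Type*} [CommRing R] {r d x y z : R}
    (h : d = r * (y ^ 2 + z ^ 2) - x ^ 2) : IsSquare (algebraMap R ℍ[R,-1,0,r] d) := by
  refine ⟨⟨0, x, y, z⟩, ?_⟩
  rw [QuaternionAlgebra.algebraMap_eq, QuaternionAlgebra.mk_mul_mk, h]
  ext <;> ring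

variable {K E : Type*} [Field K] [Field E] [Algebra K E]

theorem countable_adjoin [Countable K] {S : Set E} (hS : S.Countable) : Countable (adjoin K S) := by
  rw [← Cardinal.mk_le_aleph0_iff, ← Cardinal.lift_le_aleph0]
  refine (lift_cardinalMk_adjoin_le K S).trans ?_
  simpa using hS

variable (K E) in
theorem exists_transcendental [Countable K] [Uncountable E] : ∃ x : E, Transcendental K x := by
  by_contra! h
  refine Set.not_countable_univ (α := E) ((Algebraic.countable K E).mono fun x _ => ?_)
  exact not_not.1 (h x)

theorem reflectsSumTwoSq_bot : ReflectsSumTwoSq (algebraMap K (⊥ : IntermediateField K E)) :=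
  fun s hs => by
    simpa only [RingHom.coe_coe, botEquiv_def] using hs.map (botEquiv K E : _ →+* K)

variable [NeZero (2 : K)] {r : K} [IsAlgClosed E] [Uncountable E] [Countable K]

variable (E) in
theorem exists_sq_add_sq_eq_and_isSumTwoSq_mul (c : K) :
    ∃ L : IntermediateField K E, Countable L ∧ (∃ z w : L, z ^ 2 + w ^ 2 = algebraMap K L c) ∧
      ∀ s, ¬ IsSumTwoSq s → IsSumTwoSq (algebraMap K L s) → IsSumTwoSq (s * c) := by
  obtain ⟨z, hz⟩ := exists_transcendental K E
  obtain ⟨w, hw⟩ := IsAlgClosed.exists_pow_nat_eq (algebraMap K E c - z ^ 2) two_pos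
  have : Countable K⟮z⟯ := countable_adjoin (Set.countable_singleton z)
  let L := K⟮z⟯⟮w⟯
  refine ⟨L.restrictScalars K, countable_adjoin (K := K⟮z⟯) (Set.countable_singleton w),
    ⟨(algebraMap K⟮z⟯ L (AdjoinSimple.gen K z) : L), (AdjoinSimple.gen K⟮z⟯ w : L),
      Subtype.ext (add_eq_of_eq_sub' hw)⟩, fun s hs hsL =>
      isSumTwoSq_mul_of_isSumTwoSq_adjoin_conic hz hw hs hsL⟩

-- A point `(x, z, w)` of the quadric `d = r (z² + w²) - x²` is a pure quaternion
-- `x i + z j + w k` of square `d` in `(-1, r)`; `L` is the function field of this quadric.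
variable (E) in
theorem exists_reflectsSumTwoSq_isSquare_algebraMap (d : K) (hr : r ≠ 0) :
    ∃ L : IntermediateField K E, Countable L ∧ ReflectsSumTwoSq (algebraMap K L) ∧
      IsSquare (algebraMap L ℍ[L,-1,0,algebraMap K L r] (algebraMap K L d)) := by
  by_cases hd : IsSquare d
  · exact ⟨⊥, (botEquiv K E).injective.countable, reflectsSumTwoSq_bot, (hd.map _).map _⟩
  obtain ⟨x, hx⟩ := exists_transcendental K E
  have : Countable K⟮x⟯ := countable_adjoin (Set.countable_singleton x)
  have : NeZero (2 : K⟮x⟯) := neZero_two_of_algebra K K⟮x⟯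
  have hrx : algebraMap K K⟮x⟯ r ≠ 0 := (_root_.map_ne_zero _).2 hr
  obtain ⟨L, hL, ⟨z, w, hzw⟩, hsum⟩ := exists_sq_add_sq_eq_and_isSumTwoSq_mul E
    ((AdjoinSimple.gen K x ^ 2 + algebraMap K K⟮x⟯ d) / algebraMap K K⟮x⟯ r)
  refine ⟨L.restrictScalars K, hL, fun s hs => ?_, ?_⟩
  · by_contra hsK
    have hs0 : s ≠ 0 := by rintro rfl; exact hsK ⟨0, 0, by simp⟩
    have hsx : ¬ IsSumTwoSq (algebraMap K K⟮x⟯ s) :=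
      fun h => hsK (reflectsSumTwoSq_adjoin_of_transcendental hx s h)
    refine not_isSumTwoSq_of_transcendental hx (not_isSquare_neg_one_of_not_isSumTwoSq hsK) hd
      (div_ne_zero hs0 hr) ?_
    convert hsum _ hsx hs using 1
    rw [map_div₀]
    field_simp
  · let x' : L := algebraMap K⟮x⟯ L (AdjoinSimple.gen K x)
    have hrL : algebraMap K L r ≠ 0 := (_root_.map_ne_zero _).2 hr
    have hquadric : algebraMap K L d = algebraMap K L r * (z ^ 2 + w ^ 2) - x' ^ 2 := by
      rw [hzw, map_div₀, ← IsScalarTower.algebraMap_apply, map_add, map_pow,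
        ← IsScalarTower.algebraMap_apply]
      field_simp
      ring
    exact isSquare_algebraMap_quaternionAlgebra_of_eq hquadric

end Step

section Iteration

variable (K E : Type*) [Field K] [Field E] [Algebra K E]

/-- The countable intermediate fields of `E / K` containing no new representations of elements of
`K` as sums of two squares. -/
def countableReflectsSumTwoSq : Set (IntermediateField K E) :=
  {L | Countable L ∧ ReflectsSumTwoSq (algebraMap K L)}

variable {K E}

/-- The elements `r` and `d` of `E` lie in `L`, and `d` has a square root in the quaternion algebra
`(-1, r)` over `L`. Taking `r` and `d` in `E` lets one compare different fields `L`. -/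
def HasQuaternionSqrt (L : IntermediateField K E) (r d : E) : Prop :=
  ∃ (hr : r ∈ L) (hd : d ∈ L), IsSquare (algebraMap L ℍ[L,-1,0,⟨r, hr⟩] ⟨d, hd⟩)

theorem HasQuaternionSqrt.mono {L M : IntermediateField K E} (hLM : L ≤ M) {r d : E}
    (h : HasQuaternionSqrt L r d) : HasQuaternionSqrt M r d := by
  obtain ⟨hr, hd, h⟩ := h
  refine ⟨hLM hr, hLM hd, ?_⟩
  simpa using! isSquare_algebraMap_quaternionAlgebra_map (inclusion hLM : L →+* M) h

theorem exists_mem_of_mem_iSup_of_monotone {f : ℕ → IntermediateField K E} (hf : Monotone f)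
    {x : E} (hx : x ∈ ⨆ n, f n) : ∃ n, x ∈ f n := by
  rwa [← SetLike.mem_coe, coe_iSup_of_directed hf.directed_le, Set.mem_iUnion] at hx

theorem iSup_mem_countableReflectsSumTwoSq {f : ℕ → IntermediateField K E} (hf : Monotone f)
    (h : ∀ n, f n ∈ countableReflectsSumTwoSq K E) : ⨆ n, f n ∈ countableReflectsSumTwoSq K E := by
  refine ⟨Set.countable_coe_iff.2 ?_, ?_⟩
  · rw [coe_iSup_of_directed hf.directed_le]
    exact Set.countable_iUnion fun n => Set.countable_coe_iff.1 (h n).1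
  rintro s ⟨x, y, hs⟩
  obtain ⟨m, hm⟩ := exists_mem_of_mem_iSup_of_monotone hf x.2
  obtain ⟨n, hn⟩ := exists_mem_of_mem_iSup_of_monotone hf y.2
  refine (h (max m n)).2 s ⟨⟨x, hf (le_max_left m n) hm⟩, ⟨y, hf (le_max_right m n) hn⟩, ?_⟩
  have hE := congrArg (algebraMap (⨆ n, f n : IntermediateField K E) E) hs
  exact Subtype.ext hE

variable [NeZero (2 : K)] [IsAlgClosed E] [Uncountable E] {L : IntermediateField K E}

theorem exists_le_hasQuaternionSqrt (hL : L ∈ countableReflectsSumTwoSq K E) {r d : E}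
    (hrL : r ∈ L) (hdL : d ∈ L) (hr : r ≠ 0) :
    ∃ M ∈ countableReflectsSumTwoSq K E, L ≤ M ∧ HasQuaternionSqrt M r d := by
  obtain ⟨_, hKL⟩ := hL
  have : NeZero (2 : L) := neZero_two_of_algebra K L
  obtain ⟨M, hM, hLM, hsqrt⟩ := exists_reflectsSumTwoSq_isSquare_algebraMap E (⟨d, hdL⟩ : L)
    (r := ⟨r, hrL⟩) (fun h => hr (congrArg Subtype.val h))
  exact ⟨M.restrictScalars K, ⟨hM, fun s hs => hKL s (hLM _ hs)⟩,
    fun x hx => M.algebraMap_mem ⟨x, hx⟩, M.algebraMap_mem ⟨r, hrL⟩, M.algebraMap_mem ⟨d, hdL⟩,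
    hsqrt⟩

theorem exists_le_forall_hasQuaternionSqrt (hL : L ∈ countableReflectsSumTwoSq K E) :
    ∃ M ∈ countableReflectsSumTwoSq K E, L ≤ M ∧
      ∀ r ∈ L, ∀ d ∈ L, r ≠ 0 → HasQuaternionSqrt M r d := by
  have := hL.1
  have := Encodable.ofCountable (L × L)
  let 𝒟 (p : L × L) : Order.Cofinal (countableReflectsSumTwoSq K E) :=
    { carrier := {M | L ≤ M → (p.1 : E) ≠ 0 → HasQuaternionSqrt M.1 p.1 p.2}
      isCofinal := fun M => by
        by_cases h : L ≤ M ∧ (p.1 : E) ≠ 0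
        · obtain ⟨N, hN, hMN, hsqrt⟩ := exists_le_hasQuaternionSqrt M.2 (h.1 p.1.2) (h.1 p.2.2) h.2
          exact ⟨⟨N, hN⟩, fun _ _ => hsqrt, hMN⟩
        · exact ⟨M, fun hLM hp => absurd ⟨hLM, hp⟩ h, le_rfl⟩ }
  let f := Order.sequenceOfCofinals ⟨L, hL⟩ 𝒟
  have hf : Monotone fun n => (f n).1 :=
    fun _ _ hmn => Order.sequenceOfCofinals.monotone ⟨L, hL⟩ 𝒟 hmn
  refine ⟨⨆ n, (f n).1, iSup_mem_countableReflectsSumTwoSq hf fun n => (f n).2,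
    le_iSup (fun n => (f n).1) 0, fun r hr d hd hr0 => ?_⟩
  have hrd := Order.sequenceOfCofinals.encode_mem ⟨L, hL⟩ 𝒟 (⟨r, hr⟩, ⟨d, hd⟩)
  exact (hrd (hf (Nat.zero_le _)) hr0).mono (le_iSup (fun n => (f n).1) _)

variable (K E) in
theorem exists_reflectsSumTwoSq_forall_isSquare_algebraMap [Countable K] :
    ∃ L : IntermediateField K E, ReflectsSumTwoSq (algebraMap K L) ∧
      ∀ d r : L, r ≠ 0 → IsSquare (algebraMap L ℍ[L,-1,0,r] d) := by
  choose! next hnext hle hsqrt using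
    fun (L : IntermediateField K E) hL => exists_le_forall_hasQuaternionSqrt (L := L) hL
  let f (n : ℕ) : IntermediateField K E := next^[n] ⊥
  have hf_succ (n : ℕ) : f (n + 1) = next (f n) := Function.iterate_succ_apply' next n ⊥
  have hf_mem (n : ℕ) : f n ∈ countableReflectsSumTwoSq K E := by
    induction n with
    | zero => exact ⟨(botEquiv K E).injective.countable, reflectsSumTwoSq_bot⟩
    | succ n ih => exact hf_succ n ▸ hnext _ ih
  have hf : Monotone f := monotone_nat_of_le_succ fun n => hf_succ n ▸ hle _ (hf_mem n)
  refine ⟨⨆ n, f n, (iSup_mem_countableReflectsSumTwoSq hf hf_mem).2, ?_⟩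
  rintro ⟨d, hd⟩ ⟨r, hr⟩ hr0
  obtain ⟨m, hm⟩ := exists_mem_of_mem_iSup_of_monotone hf hd
  obtain ⟨n, hn⟩ := exists_mem_of_mem_iSup_of_monotone hf hr
  have hdr : HasQuaternionSqrt (f (max m n + 1)) r d := hf_succ _ ▸ hsqrt _ (hf_mem _) r
    (hf (le_max_right m n) hn) d (hf (le_max_left m n) hm) fun h => hr0 (Subtype.ext h)
  exact (hdr.mono (le_iSup f _)).2.2

end Iteration

section QuaternionAlgebra

theorem isUnit_of_re_mul_star_ne_zero {K : Type*} [Field K] {a b c : K} {q : ℍ[K,a,b,c]}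
    (hq : (q * star q).re ≠ 0) : IsUnit q := by
  have hcancel : (q * star q).re⁻¹ • (q * star q) = 1 := by
    conv_lhs => rhs; rw [QuaternionAlgebra.mul_star_eq_coe]
    rw [← QuaternionAlgebra.coe_smul, smul_eq_mul, inv_mul_cancel₀ hq, QuaternionAlgebra.coe_one]
  refine isUnit_iff_exists.2 ⟨(q * star q).re⁻¹ • star q, ?_, ?_⟩
  · rw [mul_smul_comm, hcancel]
  · rw [smul_mul_assoc, star_comm_self', hcancel]

theorem center_quaternionAlgebra_eq_bot_s11 {R : Type*} [CommRing R] [IsDomain R] [NeZero (2 : R)]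
    {a b : R} (ha : a ≠ 0) : Subalgebra.center R ℍ[R,a,b] = ⊥ := by
  refine eq_bot_iff.2 fun q hq => Algebra.mem_bot.2 ⟨q.re, ?_⟩
  have eq_zero_of_eq_neg {x : R} (hx : x = -x) : x = 0 :=
    (mul_eq_zero.1 (by linear_combination hx)).resolve_left (two_ne_zero (α := R))
  have hcomm := Subalgebra.mem_center_iff.1 hq
  have hI : q.imI = 0 := eq_zero_of_eq_neg <| Eq.symm <| by
    simpa using congrArg QuaternionAlgebra.imK (hcomm ⟨0, 0, 1, 0⟩)
  have hJ : q.imJ = 0 := eq_zero_of_eq_neg <| by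
    simpa using congrArg QuaternionAlgebra.imK (hcomm ⟨0, 1, 0, 0⟩)
  have haK : a * q.imK = 0 := eq_zero_of_eq_neg <| by
    simpa using congrArg QuaternionAlgebra.imJ (hcomm ⟨0, 1, 0, 0⟩)
  have hK : q.imK = 0 := (mul_eq_zero.1 haK).resolve_left ha
  ext <;> simp [*, QuaternionAlgebra.algebraMap_eq]

theorem exists_ne_zero_mul_eq_mul_of_mul_self_eq_neg_one {R : Type*} [CommRing R] [Nontrivial R]
    {s : R} {i' : ℍ[R,-1,0,s]} (h : i' * i' = -1) :
    ∃ u : ℍ[R,-1,0,s], u ≠ 0 ∧ ⟨0, 1, 0, 0⟩ * u = u * i' := by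
  have hi : (⟨0, 1, 0, 0⟩ * ⟨0, 1, 0, 0⟩ : ℍ[R,-1,0,s]) = -1 := by ext <;> simp
  by_cases hneg : ⟨0, 1, 0, 0⟩ + i' = 0
  · refine ⟨⟨0, 0, 1, 0⟩, fun h0 => by simpa using congrArg QuaternionAlgebra.imJ h0, ?_⟩
    rw [← neg_eq_of_add_eq_zero_right hneg]
    ext <;> simp
  · exact ⟨_, hneg, by rw [mul_add, add_mul, hi, h, add_comm]⟩

theorem isSumTwoSq_mul_of_anticommute {R : Type*} [CommRing R] [IsDomain R] [NeZero (2 : R)]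
    {r s : R} {t : ℍ[R,-1,0,s]} (hanti : ⟨0, 1, 0, 0⟩ * t = -(t * ⟨0, 1, 0, 0⟩))
    (ht : t * t = algebraMap R _ r) :
    IsSumTwoSq (r * s) := by
  obtain ⟨a, b, c, d⟩ := t
  have hre := congrArg QuaternionAlgebra.re hanti
  have himI := congrArg QuaternionAlgebra.imI hanti
  have hnorm := congrArg QuaternionAlgebra.re ht
  simp only [QuaternionAlgebra.mk_mul_mk, QuaternionAlgebra.neg_mk] at hre himI
  simp only [QuaternionAlgebra.mk_mul_mk, QuaternionAlgebra.algebraMap_eq] at hnorm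
  obtain rfl : a = 0 := (mul_eq_zero.1 (by linear_combination himI)).resolve_left two_ne_zero
  obtain rfl : b = 0 := (mul_eq_zero.1 (by linear_combination -hre)).resolve_left two_ne_zero
  exact ⟨s * c, s * d, by linear_combination -s * hnorm⟩

variable {K : Type*} [Field K] [NeZero (2 : K)] {r s : K}

theorem isUnit_or_eq_zero_of_not_isSumTwoSq (hr : ¬ IsSumTwoSq r) (q : ℍ[K,-1,0,r]) :
    IsUnit q ∨ q = 0 := by
  refine or_iff_not_imp_left.2 fun hq => ?_
  obtain ⟨a, b, c, d⟩ := q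
  have hnorm : a ^ 2 + b ^ 2 - r * (c ^ 2 + d ^ 2) = 0 := by
    by_contra h
    refine hq (isUnit_of_re_mul_star_ne_zero (ne_of_eq_of_ne ?_ h))
    rw [QuaternionAlgebra.star_mk, QuaternionAlgebra.mk_mul_mk]
    ring
  have hneg := not_isSquare_neg_one_of_not_isSumTwoSq hr
  have hcd : c ^ 2 + d ^ 2 = 0 := by
    by_contra hcd
    refine hr ⟨(a * c + b * d) / (c ^ 2 + d ^ 2), (a * d - b * c) / (c ^ 2 + d ^ 2), ?_⟩
    field_simp
    linear_combination -(c ^ 2 + d ^ 2) * hnorm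
  obtain ⟨rfl, rfl⟩ := eq_zero_of_sq_add_sq_eq_zero_s11 hneg hcd
  obtain ⟨rfl, rfl⟩ := eq_zero_of_sq_add_sq_eq_zero_s11 hneg (x := a) (y := b) (by simpa using hnorm)
  rfl

theorem isSumTwoSq_mul_of_basis (hs : ¬ IsSumTwoSq s)
    (B : QuaternionAlgebra.Basis ℍ[K,-1,0,s] (-1) 0 r) : IsSumTwoSq (r * s) := by
  obtain ⟨u, hu, hui⟩ :=
    exists_ne_zero_mul_eq_mul_of_mul_self_eq_neg_one (s := s) (i' := B.i) (by simp)
  obtain ⟨u, rfl⟩ := (isUnit_or_eq_zero_of_not_isSumTwoSq hs u).resolve_right hu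
  have hiu : B.i * ↑u⁻¹ = ↑u⁻¹ * ⟨0, 1, 0, 0⟩ := by
    rw [Units.eq_inv_mul_iff_mul_eq, ← mul_assoc, ← hui, Units.mul_inv_cancel_right]
  have hij : B.i * B.j = -(B.j * B.i) := by simp
  refine isSumTwoSq_mul_of_anticommute (t := u * B.j * ↑u⁻¹) ?_ ?_
  · calc ⟨0, 1, 0, 0⟩ * (u * B.j * ↑u⁻¹) = u * (B.i * B.j) * ↑u⁻¹ := by
          simp only [← mul_assoc, hui]
      _ = -(u * B.j * (B.i * ↑u⁻¹)) := by simp only [hij, mul_neg, neg_mul, mul_assoc]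
      _ = -(u * B.j * ↑u⁻¹ * ⟨0, 1, 0, 0⟩) := by rw [hiu, ← mul_assoc]
  · calc u * B.j * ↑u⁻¹ * (u * B.j * ↑u⁻¹) = u * (B.j * B.j) * ↑u⁻¹ := by
          simp only [mul_assoc, Units.inv_mul_cancel_left]
      _ = algebraMap K _ r := by
          rw [B.j_mul_j, Algebra.algebraMap_eq_smul_one, mul_smul_comm, smul_mul_assoc, mul_one,
            Units.mul_inv]

theorem isEmpty_quaternionAlgebra_algEquiv (hs : ¬ IsSumTwoSq s) (hrs : ¬ IsSumTwoSq (r * s)) :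
    IsEmpty (ℍ[K,-1,0,r] ≃ₐ[K] ℍ[K,-1,0,s]) :=
  ⟨fun f => hrs (isSumTwoSq_mul_of_basis hs ((QuaternionAlgebra.Basis.self K).compHom f))⟩

/-- The division algebra `(-1, r)` of degree two, for `r` not a sum of two squares. -/
noncomputable def quaternionDivisionAlgebra {K : Type} [Field K] [NeZero (2 : K)] (r : K)
    (hr : ¬ IsSumTwoSq r) : CentralDivAlg K 2 where
  carrier := ℍ[K,-1,0,r]
  divisionRing := DivisionRing.ofIsUnitOrEqZero (isUnit_or_eq_zero_of_not_isSumTwoSq hr)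
  algebra := (inferInstance : Algebra K ℍ[K,-1,0,r])
  findim := (inferInstance : FiniteDimensional K ℍ[K,-1,0,r])
  central := center_quaternionAlgebra_eq_bot_s11 (neg_ne_zero.2 one_ne_zero)
  degree_eq := QuaternionAlgebra.finrank_eq_four _ _ _

end QuaternionAlgebra

section QuadraticSubfields

variable {K F : Type*} [Field K] [Field F] [Algebra K F]

theorem exists_powerBasis_of_finrank_eq_two (hF : Module.finrank K F = 2) :
    ∃ B : PowerBasis K F, B.dim = 2 := by
  have : FiniteDimensional K F := .of_finrank_pos (by omega)
  have : IsSimpleOrder (IntermediateField K F) :=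
    isSimpleOrder_of_finrank_prime K F (hF ▸ Nat.prime_two)
  obtain ⟨x, -, hx⟩ := SetLike.exists_of_lt (bot_lt_top (α := IntermediateField K F))
  have hx_top : K⟮x⟯ = ⊤ := (eq_bot_or_eq_top K⟮x⟯).resolve_left (by simpa using hx)
  let B := (adjoin.powerBasis (IsIntegral.of_finite K x)).map
    ((equivOfEq hx_top).trans topEquiv)
  exact ⟨B, B.finrank.symm.trans hF⟩

theorem nonempty_algHom_of_forall_isSquare_algebraMap [NeZero (2 : K)] {A : Type*} [Ring A]
    [Algebra K A] (hA : ∀ d : K, IsSquare (algebraMap K A d)) (hF : Module.finrank K F = 2) :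
    Nonempty (F →ₐ[K] A) := by
  obtain ⟨B, hB⟩ := exists_powerBasis_of_finrank_eq_two hF
  obtain ⟨e, d, hmin⟩ : ∃ e d : K, minpoly K B.gen = (X + C e) ^ 2 - C d := by
    obtain ⟨b, c, hbc⟩ := (isMonicOfDegree_two_iff (f := minpoly K B.gen)).1
      ⟨by rw [B.natDegree_minpoly, hB], minpoly.monic B.isIntegral_gen⟩
    have hb : C b = 2 * C (b / 2) := by
      rw [← map_ofNat C 2, ← map_mul, mul_div_cancel₀ _ two_ne_zero]
    refine ⟨b / 2, (b / 2) ^ 2 - c, ?_⟩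
    rw [hbc, hb, map_sub, map_pow]
    ring
  obtain ⟨β, hβ⟩ := hA d
  exact ⟨B.lift (β - algebraMap K A e) (by simp [hmin, hβ, sq])⟩

end QuadraticSubfields

section Primes

theorem exists_injective_prime_mod_four_eq_three :
    ∃ p : ℕ → ℕ, Function.Injective p ∧ ∀ n, (p n).Prime ∧ p n % 4 = 3 := by
  have h := Nat.infinite_setOfPred_prime_and_eq_mod (q := 4) (a := 3) (by decide)
  refine ⟨fun n => h.natEmbedding _ n, Subtype.val_injective.comp (h.natEmbedding _).injective,
    fun n => ?_⟩
  obtain ⟨hp, h3⟩ := (h.natEmbedding _ n).2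
  exact ⟨hp, (ZMod.natCast_eq_natCast_iff' _ 3 4).1 h3⟩

theorem dvd_and_dvd_of_dvd_sq_add_sq {p : ℕ} (hp : p.Prime) (hp3 : p % 4 = 3) {u v : ℤ}
    (h : (p : ℤ) ∣ u ^ 2 + v ^ 2) : (p : ℤ) ∣ u ∧ (p : ℤ) ∣ v := by
  have := Fact.mk hp
  have hneg : ¬ IsSquare (-1 : ZMod p) := by
    rw [ZMod.exists_sq_eq_neg_one_iff, not_not, hp3]
  simp only [← ZMod.intCast_zmod_eq_zero_iff_dvd] at h ⊢
  exact eq_zero_of_sq_add_sq_eq_zero_s11 hneg (by exact_mod_cast h)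

theorem not_isSumTwoSq_rat_mul_of_prime {p m : ℕ} (hp : p.Prime) (hp3 : p % 4 = 3)
    (hm : p.Coprime m) : ¬ IsSumTwoSq (p * m : ℚ) := by
  have hpZ := Nat.prime_iff_prime_int.1 hp
  simpa using not_isSumTwoSq_algebraMap_mul (F := ℚ) hpZ.ne_zero hpZ.not_isUnit
    (fun u v => dvd_and_dvd_of_dvd_sq_add_sq hp hp3) (Nat.isCoprime_iff_coprime.2 hm)

end Primes

/-- there exist a field `K` of characteristic 0 and an infinite sequence of
quaternion division algebras over `K` (central division `K`-algebras of degree 2) which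
are pairwise non-isomorphic, yet any two of them have the same quadratic subfields; in
particular the genus of a quaternion division algebra can be infinite. -/
theorem exists_infinitely_many_quaternion_algebras_with_same_quadratic_subfields :
    ∃ (K : Type) (_ : Field K), CharZero K ∧
      ∃ D : ℕ → CentralDivAlg K 2,
        (∀ i j : ℕ, i ≠ j → IsEmpty ((D i).carrier ≃ₐ[K] (D j).carrier)) ∧
        (∀ (F : Type) [Field F] [Algebra K F], Module.finrank K F = 2 →
          ∀ i j : ℕ,
            (Nonempty (F →ₐ[K] (D i).carrier) ↔ Nonempty (F →ₐ[K] (D j).carrier))) := by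
  have : Uncountable ℂ := Set.not_countable_univ_iff.1 not_countable_complex
  obtain ⟨K, hK, hsquare⟩ := exists_reflectsSumTwoSq_forall_isSquare_algebraMap ℚ ℂ
  obtain ⟨p, hinj, hp⟩ := exists_injective_prime_mod_four_eq_three
  have hp_mul (n m : ℕ) (hm : (p n).Coprime m) : ¬ IsSumTwoSq (p n * m : K) := fun h =>
    not_isSumTwoSq_rat_mul_of_prime (hp n).1 (hp n).2 hm (hK _ (by simpa using h))
  have hp_single (n : ℕ) : ¬ IsSumTwoSq (p n : K) := by
    simpa using hp_mul n 1 (Nat.coprime_one_right _)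
  refine ⟨K, inferInstance, inferInstance,
    fun n => quaternionDivisionAlgebra (p n) (hp_single n), fun i j hij => ?_, fun F _ _ hF => ?_⟩
  · exact isEmpty_quaternionAlgebra_algEquiv (hp_single j)
      (hp_mul i (p j) ((Nat.coprime_primes (hp i).1 (hp j).1).2 (hinj.ne hij)))
  · have hembed (n : ℕ) : Nonempty (F →ₐ[K] ℍ[K,-1,0,p n]) :=
      nonempty_algHom_of_forall_isSquare_algebraMap
        (fun d => hsquare d (p n) (Nat.cast_ne_zero.2 (hp n).1.ne_zero)) hF
    exact fun i j => ⟨fun _ => hembed j, fun _ => hembed i⟩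
end
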